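/- arXiv:1510.05455 — 2 statements merged into one kernel-verified Lean document; each statement's English description precedes it below -/
import Mathlib

section
/- Let v be a radial weight such that ∫₀¹ (1-s)²/v̂(s) ds < ∞. Then there exists a constant C = C(v) > 0 such that for every function f analytic on the unit disc 𝔻, ∫₀¹ |f(t)| dt ≤ C · ‖f‖_{D_v}. -/
open MeasureTheory Real Set Filter

noncomputable section

/-- `hatw v r = ∫_r^1 v(s) ds`. -/
def hatw (v : ℝ → ℝ) (r : ℝ) : ℝ := ∫ s in r..1, v s

/-- A radial weight: measurable, positive on `[0,1)`, integrable on `(0,1)`. -/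
def RadialWeight (v : ℝ → ℝ) : Prop :=
  Measurable v ∧ (∀ r ∈ Set.Ico (0:ℝ) 1, 0 < v r) ∧
    MeasureTheory.IntegrableOn v (Set.Ioo 0 1)

/-- Membership in the class `D̂`. -/
def DoublingD (v : ℝ → ℝ) : Prop :=
  ∃ C : ℝ, 1 ≤ C ∧ ∀ r ∈ Set.Ico (0:ℝ) 1, hatw v r ≤ C * hatw v ((1+r)/2)

/-- Squared Dirichlet-type norm `‖f‖_{D_v}^2`. -/
def DvSq (v : ℝ → ℝ) (f : ℂ → ℂ) : ENNReal :=
  (‖f 0‖₊ : ENNReal)^2 +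
    (ENNReal.ofReal Real.pi)⁻¹ *
      ∫⁻ z in Metric.ball (0:ℂ) 1, (‖deriv f z‖₊ : ENNReal)^2 * ENNReal.ofReal (v ‖z‖)

/-- The Muckenhoupt type quantity `M₁(v)`. -/
def M1v (v : ℝ → ℝ) : ENNReal :=
  ⨆ r ∈ Set.Ioo (0:ℝ) 1,
    (∫⁻ s in Set.Ioo r 1, ENNReal.ofReal (hatw v s / (1-s)^2)) ^ (1/2 : ℝ) *
    (∫⁻ s in Set.Ioo (0:ℝ) r, ENNReal.ofReal (1 / hatw v s)) ^ (1/2 : ℝ)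

/-- The Muckenhoupt type quantity `M₂(v)`. -/
def M2v (v : ℝ → ℝ) : ENNReal :=
  ⨆ r ∈ Set.Ioo (0:ℝ) 1,
    (∫⁻ s in Set.Ioo (0:ℝ) r, ENNReal.ofReal (hatw v s / (1-s)^4)) ^ (1/2 : ℝ) *
    (∫⁻ s in Set.Ioo r 1, ENNReal.ofReal ((1-s)^2 / hatw v s)) ^ (1/2 : ℝ)

/-- The moment `v_x = ∫_0^1 s^x v(s) ds`. -/
def vx (v : ℝ → ℝ) (x : ℕ) : ℝ := ∫ s in (0:ℝ)..1, s^x * v s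

/-- `M_∞(s,f)`, the maximum of `|f|` on the circle of radius `s`. -/
def Minf (f : ℂ → ℂ) (s : ℝ) : ℝ := sSup ((fun z => ‖f z‖) '' Metric.sphere (0:ℂ) s)

/-- `M₂(r,h)`. -/
def M2mean (h : ℂ → ℂ) (r : ℝ) : ℝ :=
  Real.sqrt ((2*Real.pi)⁻¹ * ∫ θ in (-Real.pi)..Real.pi, ‖h ((r:ℂ) * Complex.exp (θ * Complex.I))‖^2)

/-- The norm of `B(2,∞)` (with values in `[0,∞]`). -/
def B2infE (g : ℂ → ℂ) : ENNReal :=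
  (‖g 0‖₊ : ENNReal) +
    ⨆ r ∈ Set.Ioo (0:ℝ) 1, ENNReal.ofReal (M2mean (deriv g) r * Real.sqrt (1-r))

/-- The `p`-th power of the norm of `B(2,p)` (with values in `[0,∞]`). -/
def B2pE (p : ℝ) (g : ℂ → ℂ) : ENNReal :=
  ENNReal.ofReal (‖g 0‖ ^ p) +
    ∫⁻ r in Set.Ioo (0:ℝ) 1, ENNReal.ofReal (M2mean (deriv g) r ^ p * (1-r)^(p/2-1))

/-- The generalized Hilbert operator `H_g`. -/
def Hg (g f : ℂ → ℂ) (z : ℂ) : ℂ := ∫ t in Set.Ioo (0:ℝ) 1, f t * deriv g (t * z)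

/-- The Hilbert operator `H` acting on functions on `[0,1)`. -/
def Hop (φ : ℝ → ℂ) (z : ℂ) : ℂ := ∫ t in Set.Ioo (0:ℝ) 1, φ t / (1 - t * z)

/-- The sublinear Hilbert operator `H̃`. -/
def Htil (φ : ℝ → ℂ) (z : ℂ) : ℂ := ∫ t in Set.Ioo (0:ℝ) 1, (‖φ t‖ : ℂ) / (1 - t * z)

/-- Squared norm in `L²_{V̂₂}`. -/
def L2V2sq (v : ℝ → ℝ) (φ : ℝ → ℂ) : ENNReal :=
  ∫⁻ t in Set.Ioo (0:ℝ) 1, (‖φ t‖₊ : ENNReal)^2 * ENNReal.ofReal (hatw v t / (1-t)^2)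

/-- Taylor coefficient `ĝ(k)` of `g` at the origin. -/
def gcoef (g : ℂ → ℂ) (k : ℕ) : ℂ := iteratedDeriv k g 0 / (Nat.factorial k)

/-!
If `h` is holomorphic on the disc, so is `z ↦ ⟪h (conj z), h z⟫`, which equals `‖h‖ ^ 2` on the real
axis; Cauchy's theorem on a half disc then gives the Fejér–Riesz inequality
`∫_{-r}^r ‖h‖ ^ 2 ≤ (r / 2) ∫_{-π}^π ‖h (r e^{iθ})‖ ^ 2 dθ`. Take `h = f'` and integrate against
`w`. By Tonelli's theorem, with `ŵ(s) = ∫_s^1 w`,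
`∫_0^1 ‖f' s‖ ^ 2 ŵ(s) ds ≤ (1 / 2) ∫_𝔻 ‖f'‖ ^ 2 w(|z|)`, area measure not being divided by `π`.
Finally `‖f t‖ ≤ ‖f 0‖ + ∫_0^t ‖f'‖` integrates to
`∫_0^1 ‖f‖ ≤ ‖f 0‖ + ∫_0^1 (1 - s) ‖f' s‖ ds`, and the last integral is bounded by Cauchy–Schwarz
with the weight `ŵ`.
-/

open scoped ENNReal ComplexConjugate InnerProductSpace

section FejerRiesz

variable {E : Type*} [NormedAddCommGroup E]

lemma circleMap_zero_mem_ball {r R : ℝ} (hr : |r| < R) (θ : ℝ) :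
    circleMap 0 r θ ∈ Metric.ball (0 : ℂ) R := by
  rwa [mem_ball_zero_iff, norm_circleMap_zero]

lemma ofReal_mem_ball_zero {x R : ℝ} (hx : |x| < R) : (x : ℂ) ∈ Metric.ball (0 : ℂ) R := by
  rwa [mem_ball_zero_iff, Complex.norm_real]

lemma continuous_comp_circleMap {X : Type*} [TopologicalSpace X] {h : ℂ → X} {r R : ℝ}
    (hr : |r| < R) (hh : ContinuousOn h (Metric.ball 0 R)) :
    Continuous fun θ ↦ h (circleMap 0 r θ) :=
  hh.comp_continuous (continuous_circleMap 0 r) (circleMap_zero_mem_ball hr)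

lemma continuousOn_comp_ofReal {X : Type*} [TopologicalSpace X] {h : ℂ → X} {R : ℝ}
    (hh : ContinuousOn h (Metric.ball 0 R)) : ContinuousOn (fun x : ℝ ↦ h x) (Ioo (-R) R) :=
  hh.comp Complex.continuous_ofReal.continuousOn fun _ hx ↦ ofReal_mem_ball_zero (abs_lt.2 hx)

lemma hasDerivAt_comp_ofReal [NormedSpace ℂ E] {g : ℂ → E} {g' : E} {x : ℝ}
    (hg : HasDerivAt g g' x) : HasDerivAt (fun t : ℝ ↦ g t) g' x := by
  simpa [Function.comp_def] using hg.scomp x Complex.ofRealCLM.hasDerivAt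

/- Both sides are increments of a primitive of `g`, which exists since the domain is a ball. -/
lemma integral_diameter_eq_neg_integral_semicircle [NormedSpace ℂ E] [CompleteSpace E]
    {g : ℂ → E} {r R : ℝ} (hr : |r| < R) (hg : DifferentiableOn ℂ g (Metric.ball 0 R)) :
    ∫ x in (-r)..r, g x =
      -∫ θ in (0 : ℝ)..π, deriv (circleMap 0 r) θ • g (circleMap 0 r θ) := by
  obtain ⟨G, hG⟩ := hg.isExactOn_ball
  have uIcc_subset : uIcc (-r) r ⊆ Ioo (-R) R := fun x hx ↦
    abs_lt.1 ((by grind [mem_uIcc] : |x| ≤ |r|).trans_lt hr)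
  have diameter : ∫ x in (-r)..r, g x = G r - G (-r : ℝ) := by
    refine intervalIntegral.integral_eq_sub_of_hasDerivAt (f := fun x : ℝ ↦ G x)
      (fun x hx ↦ hasDerivAt_comp_ofReal
        (hG x (ofReal_mem_ball_zero (abs_lt.2 (uIcc_subset hx))))) ?_
    exact ((continuousOn_comp_ofReal hg.continuousOn).mono uIcc_subset).intervalIntegrable
  have semicircle : ∫ θ in (0 : ℝ)..π, deriv (circleMap 0 r) θ • g (circleMap 0 r θ) =
      G (-r : ℝ) - G r := by
    rw [intervalIntegral.integral_eq_sub_of_hasDerivAt (f := fun θ ↦ G (circleMap 0 r θ))]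
    · simp [circleMap]
    · intro θ _
      exact (hG _ (circleMap_zero_mem_ball hr θ)).scomp θ
        (differentiable_circleMap 0 r θ).hasDerivAt
    · simp only [deriv_circleMap]
      exact (((continuous_circleMap 0 r).mul continuous_const).smul
        (continuous_comp_circleMap hr hg.continuousOn)).intervalIntegrable _ _
  rw [diameter, semicircle, neg_sub]

lemma ofReal_integral_norm_sq {φ : ℝ → E} {a b : ℝ} (hab : a ≤ b)
    (hφ : ContinuousOn φ (Icc a b)) :
    ENNReal.ofReal (∫ x in a..b, ‖φ x‖ ^ 2) = ∫⁻ x in Ioo a b, ‖φ x‖ₑ ^ 2 := by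
  have integrable : IntegrableOn (fun x ↦ ‖φ x‖ ^ 2) (Ioo a b) :=
    (ContinuousOn.integrableOn_Icc (hφ.norm.pow 2)).mono_set Ioo_subset_Icc_self
  rw [intervalIntegral.integral_of_le hab, integral_Ioc_eq_integral_Ioo,
    ofReal_integral_eq_lintegral_ofReal integrable (.of_forall fun _ ↦ by positivity)]
  simp only [ENNReal.ofReal_pow (norm_nonneg _), ofReal_norm]

variable [InnerProductSpace ℂ E] {h : ℂ → E} {r R : ℝ}

lemma differentiableOn_inner_comp_conj (hh : DifferentiableOn ℂ h (Metric.ball 0 R)) :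
    DifferentiableOn ℂ (fun z ↦ ⟪h (conj z), h z⟫_ℂ) (Metric.ball 0 R) := by
  intro z hz
  have differentiableAt_h {u : ℂ} (hu : u ∈ Metric.ball (0 : ℂ) R) : DifferentiableAt ℂ h u :=
    hh.differentiableAt (Metric.isOpen_ball.mem_nhds hu)
  have hz' : conj z ∈ Metric.ball (0 : ℂ) R := by simpa using hz
  have dual : DifferentiableAt ℂ (fun u ↦ innerSL ℂ (h (conj u))) z := by
    simpa [Function.comp_def] using
      (differentiableAt_h hz').comp_semilinear₁ (starRingEnd ℂ) (innerSL ℂ)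
  exact (dual.clm_apply (differentiableAt_h hz)).differentiableWithinAt

theorem integral_norm_sq_diameter_le (hr₀ : 0 ≤ r) (hrR : r < R)
    (hh : DifferentiableOn ℂ h (Metric.ball 0 R)) :
    ∫ x in (-r)..r, ‖h x‖ ^ 2 ≤ r / 2 * ∫ θ in (-π)..π, ‖h (circleMap 0 r θ)‖ ^ 2 := by
  have hr : |r| < R := by rwa [abs_of_nonneg hr₀]
  set A : ℝ → ℝ := fun θ ↦ ‖h (circleMap 0 r θ)‖ ^ 2
  have hA : Continuous A := (continuous_comp_circleMap hr hh.continuousOn).norm.pow 2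
  have hA_neg : Continuous fun θ ↦ A (-θ) := hA.comp continuous_neg
  have integral_inner : ∫ x in (-r)..r, ⟪h (conj (x : ℂ)), h x⟫_ℂ =
      (∫ x in (-r)..r, ‖h x‖ ^ 2 : ℝ) := by
    simp [← intervalIntegral.integral_ofReal, inner_self_eq_norm_sq_to_K]
  have norm_integrand_le (θ : ℝ) : ‖deriv (circleMap 0 r) θ •
      ⟪h (conj (circleMap 0 r θ)), h (circleMap 0 r θ)⟫_ℂ‖ ≤ r / 2 * (A θ + A (-θ)) := by
    rw [norm_smul, deriv_circleMap, norm_mul, norm_circleMap_zero, Complex.norm_I, mul_one,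
      abs_of_nonneg hr₀, conj_circleMap_zero, div_mul_eq_mul_div, mul_div_assoc]
    gcongr
    have := two_mul_le_add_sq ‖h (circleMap 0 r (-θ))‖ ‖h (circleMap 0 r θ)‖
    linarith [norm_inner_le_norm (𝕜 := ℂ) (h (circleMap 0 r (-θ))) (h (circleMap 0 r θ))]
  calc ∫ x in (-r)..r, ‖h x‖ ^ 2
      ≤ ‖∫ x in (-r)..r, ⟪h (conj (x : ℂ)), h x⟫_ℂ‖ := by
        rw [integral_inner, Complex.norm_real]
        exact le_norm_self _
    _ = ‖∫ θ in (0 : ℝ)..π, deriv (circleMap 0 r) θ •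
          ⟪h (conj (circleMap 0 r θ)), h (circleMap 0 r θ)⟫_ℂ‖ := by
        rw [integral_diameter_eq_neg_integral_semicircle hr (differentiableOn_inner_comp_conj hh),
          norm_neg]
    _ ≤ ∫ θ in (0 : ℝ)..π, r / 2 * (A θ + A (-θ)) :=
        intervalIntegral.norm_integral_le_of_norm_le pi_pos.le
          (.of_forall fun θ _ ↦ norm_integrand_le θ)
          ((hA.add hA_neg).const_mul _ |>.intervalIntegrable _ _)
    _ = r / 2 * ∫ θ in (-π)..π, A θ := by
        rw [intervalIntegral.integral_const_mul, intervalIntegral.integral_add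
          (hA.intervalIntegrable _ _) (hA_neg.intervalIntegrable _ _),
          intervalIntegral.integral_comp_neg, neg_zero, add_comm,
          intervalIntegral.integral_add_adjacent_intervals
          (hA.intervalIntegrable _ _) (hA.intervalIntegrable _ _)]

theorem lintegral_enorm_sq_diameter_le (hr₀ : 0 ≤ r) (hrR : r < R)
    (hh : DifferentiableOn ℂ h (Metric.ball 0 R)) :
    ∫⁻ x in Ioo (-r) r, ‖h x‖ₑ ^ 2 ≤
      ENNReal.ofReal (r / 2) * ∫⁻ θ in Ioo (-π) π, ‖h (circleMap 0 r θ)‖ₑ ^ 2 := by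
  have continuousOn_diameter : ContinuousOn (fun x : ℝ ↦ h x) (Icc (-r) r) :=
    (continuousOn_comp_ofReal hh.continuousOn).mono (Icc_subset_Ioo (neg_lt_neg hrR) hrR)
  have continuous_circle : Continuous fun θ ↦ h (circleMap 0 r θ) :=
    continuous_comp_circleMap (by rwa [abs_of_nonneg hr₀]) hh.continuousOn
  rw [← ofReal_integral_norm_sq (by linarith) continuousOn_diameter,
    ← ofReal_integral_norm_sq (by linarith [pi_pos]) continuous_circle.continuousOn,
    ← ENNReal.ofReal_mul (by positivity)]
  exact ENNReal.ofReal_le_ofReal (integral_norm_sq_diameter_le hr₀ hrR hh)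

end FejerRiesz

section Lintegral

lemma measurable_indicator_of_continuousOn {X Y : Type*} [TopologicalSpace X] [MeasurableSpace X]
    [OpensMeasurableSpace X] [TopologicalSpace Y] [MeasurableSpace Y] [BorelSpace Y] [Zero Y]
    {f : X → Y} {s : Set X} (hs : MeasurableSet s) (hf : ContinuousOn f s) :
    Measurable (s.indicator f) := by
  classical
  rw [← piecewise_eq_indicator]
  exact hf.measurable_piecewise continuousOn_const hs

lemma aestronglyMeasurable_comp_ofReal {E : Type*} [TopologicalSpace E]
    [TopologicalSpace.PseudoMetrizableSpace E] {h : ℂ → E} {R : ℝ}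
    (hh : ContinuousOn h (Metric.ball 0 R)) :
    AEStronglyMeasurable (fun x : ℝ ↦ h x) (volume.restrict (Ioo 0 R)) := by
  refine ((continuousOn_comp_ofReal hh).mono fun x hx ↦ ?_).aestronglyMeasurable measurableSet_Ioo
  exact ⟨by linarith [hx.1, hx.2], hx.2⟩

theorem lintegral_eq_lintegral_circleMap {F : ℂ → ℝ≥0∞} (hF : Measurable F) :
    ∫⁻ z, F z =
      ∫⁻ r in Ioi (0 : ℝ), ENNReal.ofReal r * ∫⁻ θ in Ioo (-π) π, F (circleMap 0 r θ) := by
  have polarCoord_symm_eq (p : ℝ × ℝ) : Complex.polarCoord.symm p = circleMap 0 p.1 p.2 := by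
    simp [Complex.polarCoord_symm_apply, circleMap, Complex.exp_mul_I]
  have hF_circle : Measurable fun p : ℝ × ℝ ↦ F (circleMap 0 p.1 p.2) :=
    hF.comp (by unfold circleMap; fun_prop)
  rw [← Complex.lintegral_comp_polarCoord_symm, polarCoord_target, Measure.volume_eq_prod,
    setLIntegral_prod _ (by simp only [polarCoord_symm_eq, smul_eq_mul]; fun_prop)]
  simp only [polarCoord_symm_eq, smul_eq_mul]
  exact lintegral_congr fun r ↦
    lintegral_const_mul _ (hF_circle.comp measurable_prodMk_left)

theorem lintegral_ball_eq_lintegral_circleMap {F : ℂ → ℝ≥0∞} {R : ℝ}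
    (hF : Measurable ((Metric.ball 0 R).indicator F)) :
    ∫⁻ z in Metric.ball 0 R, F z =
      ∫⁻ r in Ioo 0 R, ENNReal.ofReal r * ∫⁻ θ in Ioo (-π) π, F (circleMap 0 r θ) := by
  rw [← lintegral_indicator Metric.isOpen_ball.measurableSet, lintegral_eq_lintegral_circleMap hF,
    ← Iio_inter_Ioi (a := R), ← setLIntegral_indicator measurableSet_Iio]
  refine setLIntegral_congr_fun measurableSet_Ioi fun r (hr : 0 < r) ↦ ?_
  by_cases hrR : r < R <;> simp [indicator, hrR, abs_of_pos hr]

theorem lintegral_ball_mul_comp_norm {F : ℂ → ℝ≥0∞} {w : ℝ → ℝ≥0∞} {R : ℝ}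
    (hF : Measurable ((Metric.ball 0 R).indicator F)) (hw : Measurable w) :
    ∫⁻ z in Metric.ball 0 R, F z * w ‖z‖ =
      ∫⁻ r in Ioo 0 R, w r * (ENNReal.ofReal r * ∫⁻ θ in Ioo (-π) π, F (circleMap 0 r θ)) := by
  have measurable_mul : Measurable ((Metric.ball (0 : ℂ) R).indicator fun z ↦ F z * w ‖z‖) := by
    convert hF.mul (hw.comp measurable_norm) using 1
    exact funext fun z ↦ indicator_mul_left ..
  rw [lintegral_ball_eq_lintegral_circleMap measurable_mul]
  refine setLIntegral_congr_fun measurableSet_Ioo fun r hr ↦ ?_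
  have hr_abs : |r| = r := abs_of_pos hr.1
  have measurable_circle : Measurable fun θ ↦ F (circleMap 0 r θ) := by
    convert hF.comp (continuous_circleMap 0 r).measurable using 1
    exact funext fun θ ↦
      (indicator_of_mem (circleMap_zero_mem_ball (hr_abs.trans_lt hr.2) θ) F).symm
  simp only [norm_circleMap_zero, hr_abs]
  rw [lintegral_mul_const _ measurable_circle]
  ring

lemma lintegral_mul_lintegral_Ioi {α : Type*} [LinearOrder α] [TopologicalSpace α]
    [OrderClosedTopology α] [SecondCountableTopology α] [MeasurableSpace α] [BorelSpace α]
    {μ ν : Measure α} [SFinite μ] [SFinite ν] {F w : α → ℝ≥0∞}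
    (hF : AEMeasurable F μ) (hw : AEMeasurable w ν) :
    ∫⁻ s, F s * ∫⁻ r in Ioi s, w r ∂ν ∂μ = ∫⁻ r, w r * ∫⁻ s in Iio r, F s ∂μ ∂ν := by
  have measurable_triangle : AEMeasurable (fun p : α × α ↦
      {q : α × α | q.1 < q.2}.indicator (fun p ↦ F p.1 * w p.2) p) (μ.prod ν) :=
    (hF.comp_fst.mul hw.comp_snd).indicator (measurableSet_lt measurable_fst measurable_snd)
  calc ∫⁻ s, F s * ∫⁻ r in Ioi s, w r ∂ν ∂μ
      = ∫⁻ s, ∫⁻ r, {q : α × α | q.1 < q.2}.indicator (fun p ↦ F p.1 * w p.2) (s, r) ∂ν ∂μ := by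
        refine lintegral_congr fun s ↦ ?_
        rw [← lintegral_const_mul'' _ hw.restrict, ← lintegral_indicator measurableSet_Ioi]
        rfl
    _ = ∫⁻ r, ∫⁻ s, {q : α × α | q.1 < q.2}.indicator (fun p ↦ F p.1 * w p.2) (s, r) ∂μ ∂ν :=
        lintegral_lintegral_swap measurable_triangle
    _ = ∫⁻ r, w r * ∫⁻ s in Iio r, F s ∂μ ∂ν := by
        refine lintegral_congr fun r ↦ ?_
        rw [mul_comm, ← lintegral_mul_const'' _ hF.restrict,
          ← lintegral_indicator measurableSet_Iio]
        rfl

lemma lintegral_Ioo_mul_lintegral_Ioo {F w : ℝ → ℝ≥0∞} {a b : ℝ}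
    (hF : AEMeasurable F (volume.restrict (Ioo a b)))
    (hw : AEMeasurable w (volume.restrict (Ioo a b))) :
    ∫⁻ s in Ioo a b, F s * ∫⁻ r in Ioo s b, w r =
      ∫⁻ r in Ioo a b, w r * ∫⁻ s in Ioo a r, F s := by
  convert lintegral_mul_lintegral_Ioi hF hw using 1
  · refine setLIntegral_congr_fun measurableSet_Ioo fun s hs ↦ ?_
    simp only [Measure.restrict_restrict measurableSet_Ioi, Ioi_inter_Ioo, max_eq_left hs.1.le]
  · refine setLIntegral_congr_fun measurableSet_Ioo fun r hr ↦ ?_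
    simp only [Measure.restrict_restrict measurableSet_Iio, Iio_inter_Ioo, min_eq_left hr.2.le]

theorem lintegral_mul_le_rpow_lintegral_sq_div_mul {α : Type*} [MeasurableSpace α] {μ : Measure α}
    {φ g W : α → ℝ≥0∞} (hφ : AEMeasurable φ μ) (hg : AEMeasurable g μ) (hW : AEMeasurable W μ)
    (hφW : ∫⁻ x, φ x ^ 2 / W x ∂μ ≠ ∞) (hgW : ∫⁻ x, g x ^ 2 * W x ∂μ ≠ ∞) :
    ∫⁻ x, φ x * g x ∂μ ≤
      (∫⁻ x, φ x ^ 2 / W x ∂μ) ^ (1 / 2 : ℝ) * (∫⁻ x, g x ^ 2 * W x ∂μ) ^ (1 / 2 : ℝ) := by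
  have hφW_meas : AEMeasurable (fun x ↦ φ x ^ 2 / W x) μ := (hφ.pow_const 2).div hW
  have hgW_meas : AEMeasurable (fun x ↦ g x ^ 2 * W x) μ := (hg.pow_const 2).mul hW
  refine (lintegral_mono_ae ?_).trans
    (ENNReal.lintegral_mul_norm_pow_le hφW_meas hgW_meas (by norm_num) (by norm_num) (by norm_num))
  filter_upwards [ae_lt_top' hφW_meas hφW, ae_lt_top' hgW_meas hgW] with x hφx hgx
  rcases eq_or_ne (W x) ∞ with hW_top | hW_top
  · have : g x = 0 := by
      by_contra hne
      simp [hW_top, hne] at hgx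
    simp [this]
  · have hφ_zero : W x = 0 → φ x ^ 2 = 0 := fun hW_zero ↦ by
      by_contra hne
      simp [hW_zero, ENNReal.div_zero hne] at hφx
    have : φ x ^ 2 / W x * (g x ^ 2 * W x) = (φ x * g x) ^ (2 : ℝ) := by
      rw [mul_left_comm, ENNReal.div_mul_cancel' hφ_zero (fun h ↦ absurd h hW_top),
        ENNReal.rpow_two, mul_pow, mul_comm]
    rw [← ENNReal.mul_rpow_of_nonneg _ _ (by norm_num), this, ← ENNReal.rpow_mul]
    norm_num

end Lintegral

section Hardy

variable {E : Type*} [NormedAddCommGroup E] [NormedSpace ℝ E] [CompleteSpace E] {φ : ℝ → E}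
  {a b : ℝ}

lemma enorm_le_enorm_add_lintegral_enorm_deriv (hab : a ≤ b) (hφ : ContinuousOn φ (Icc a b))
    (hφ' : DifferentiableOn ℝ φ (Ioo a b)) :
    ‖φ b‖ₑ ≤ ‖φ a‖ₑ + ∫⁻ s in Ioo a b, ‖deriv φ s‖ₑ := by
  rcases eq_or_ne (∫⁻ s in Ioo a b, ‖deriv φ s‖ₑ) ∞ with htop | htop
  · simp [htop]
  have integrable_deriv : IntegrableOn (deriv φ) (Ioo a b) :=
    ⟨aestronglyMeasurable_deriv _ _, htop.lt_top⟩
  have enorm_sub_le : ‖φ b - φ a‖ₑ ≤ ∫⁻ s in Ioo a b, ‖deriv φ s‖ₑ := by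
    rw [← ofReal_integral_norm_eq_lintegral_enorm integrable_deriv, ← ofReal_norm,
      ← integral_Ioc_eq_integral_Ioo, ← intervalIntegral.integral_of_le hab]
    refine ENNReal.ofReal_le_ofReal (norm_sub_le_integral_of_norm_deriv_le_of_le hab hφ hφ'
      (.of_forall fun _ _ ↦ le_rfl) ?_)
    exact (intervalIntegrable_iff_integrableOn_Ioo_of_le hab).2 integrable_deriv.norm
  calc ‖φ b‖ₑ = ‖φ a + (φ b - φ a)‖ₑ := by rw [add_sub_cancel]
    _ ≤ ‖φ a‖ₑ + ‖φ b - φ a‖ₑ := enorm_add_le _ _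
    _ ≤ _ := by gcongr

theorem lintegral_enorm_le_add_lintegral_mul_enorm_deriv (hφ : ContinuousOn φ (Ico a b))
    (hφ' : DifferentiableOn ℝ φ (Ioo a b)) :
    ∫⁻ t in Ioo a b, ‖φ t‖ₑ ≤
      ENNReal.ofReal (b - a) * ‖φ a‖ₑ +
        ∫⁻ s in Ioo a b, ENNReal.ofReal (b - s) * ‖deriv φ s‖ₑ := by
  calc ∫⁻ t in Ioo a b, ‖φ t‖ₑ
      ≤ ∫⁻ t in Ioo a b, (‖φ a‖ₑ + 1 * ∫⁻ s in Ioo a t, ‖deriv φ s‖ₑ) := by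
        refine setLIntegral_mono' measurableSet_Ioo fun t ht ↦ ?_
        rw [one_mul]
        exact enorm_le_enorm_add_lintegral_enorm_deriv ht.1.le
          (hφ.mono (Icc_subset_Ico_right ht.2)) (hφ'.mono (Ioo_subset_Ioo_right ht.2.le))
    _ = ENNReal.ofReal (b - a) * ‖φ a‖ₑ +
          ∫⁻ s in Ioo a b, ‖deriv φ s‖ₑ * ∫⁻ _ in Ioo s b, 1 := by
        rw [lintegral_add_left measurable_const, setLIntegral_const, Real.volume_Ioo, mul_comm,
          lintegral_Ioo_mul_lintegral_Ioo (aestronglyMeasurable_deriv _ _).enorm aemeasurable_const]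
    _ = _ := by simp only [setLIntegral_one, Real.volume_Ioo, mul_comm]

end Hardy

section Dirichlet

variable {E : Type*} [NormedAddCommGroup E]

/-- The squared Dirichlet-type norm `‖f‖²_{D_w}` of a vector-valued function, for a radial weight
`w` with values in `[0, ∞]`. As in `DvSq`, area measure is divided by `π`. -/
def dirichletNormSq [NormedSpace ℂ E] (w : ℝ → ℝ≥0∞) (f : ℂ → E) : ℝ≥0∞ :=
  ‖f 0‖ₑ ^ 2 +
    (ENNReal.ofReal π)⁻¹ * ∫⁻ z in Metric.ball (0 : ℂ) 1, ‖deriv f z‖ₑ ^ 2 * w ‖z‖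

lemma enorm_apply_zero_le_rpow_dirichletNormSq [NormedSpace ℂ E] (w : ℝ → ℝ≥0∞) (f : ℂ → E) :
    ‖f 0‖ₑ ≤ dirichletNormSq w f ^ (1 / 2 : ℝ) := by
  rw [one_div, ENNReal.le_rpow_inv_iff two_pos, ENNReal.rpow_two]
  exact le_self_add

lemma lintegral_enorm_deriv_sq_mul_le_dirichletNormSq [NormedSpace ℂ E] (w : ℝ → ℝ≥0∞) (f : ℂ → E) :
    ∫⁻ z in Metric.ball (0 : ℂ) 1, ‖deriv f z‖ₑ ^ 2 * w ‖z‖ ≤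
      ENNReal.ofReal π * dirichletNormSq w f := by
  rw [dirichletNormSq, mul_add, ← mul_assoc,
    ENNReal.mul_inv_cancel (by simp [pi_pos]) ENNReal.ofReal_ne_top, one_mul]
  exact le_add_self

variable [InnerProductSpace ℂ E] {w : ℝ → ℝ≥0∞}

theorem lintegral_enorm_sq_mul_lintegral_Ioo_le (hw : Measurable w) {h : ℂ → E} {R : ℝ}
    (hh : DifferentiableOn ℂ h (Metric.ball 0 R)) :
    ∫⁻ s in Ioo 0 R, ‖h s‖ₑ ^ 2 * ∫⁻ r in Ioo s R, w r ≤
      2⁻¹ * ∫⁻ z in Metric.ball (0 : ℂ) R, ‖h z‖ₑ ^ 2 * w ‖z‖ := by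
  have measurable_radius : AEMeasurable (fun s : ℝ ↦ ‖h s‖ₑ ^ 2) (volume.restrict (Ioo 0 R)) :=
    (aestronglyMeasurable_comp_ofReal hh.continuousOn).enorm.pow_const 2
  have measurable_ball : Measurable ((Metric.ball (0 : ℂ) R).indicator fun z ↦ ‖h z‖ₑ ^ 2) :=
    measurable_indicator_of_continuousOn Metric.isOpen_ball.measurableSet
      ((ENNReal.continuous_pow 2).comp_continuousOn hh.continuousOn.enorm)
  calc ∫⁻ s in Ioo 0 R, ‖h s‖ₑ ^ 2 * ∫⁻ r in Ioo s R, w r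
      = ∫⁻ r in Ioo 0 R, w r * ∫⁻ s in Ioo 0 r, ‖h s‖ₑ ^ 2 :=
        lintegral_Ioo_mul_lintegral_Ioo measurable_radius hw.aemeasurable
    _ ≤ ∫⁻ r in Ioo 0 R, w r *
          (ENNReal.ofReal (r / 2) * ∫⁻ θ in Ioo (-π) π, ‖h (circleMap 0 r θ)‖ₑ ^ 2) := by
        refine setLIntegral_mono' measurableSet_Ioo fun r hr ↦ ?_
        gcongr
        exact (lintegral_mono_set (Ioo_subset_Ioo_left (by linarith [hr.1]))).trans
          (lintegral_enorm_sq_diameter_le hr.1.le hr.2 hh)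
    _ = ∫⁻ r in Ioo 0 R, 2⁻¹ *
          (w r * (ENNReal.ofReal r * ∫⁻ θ in Ioo (-π) π, ‖h (circleMap 0 r θ)‖ₑ ^ 2)) := by
        refine lintegral_congr fun r ↦ ?_
        rw [ENNReal.ofReal_div_of_pos two_pos, ENNReal.ofReal_ofNat, ENNReal.div_eq_inv_mul]
        ring
    _ = 2⁻¹ * ∫⁻ z in Metric.ball (0 : ℂ) R, ‖h z‖ₑ ^ 2 * w ‖z‖ := by
        rw [lintegral_ball_mul_comp_norm measurable_ball hw, lintegral_const_mul' _ _ (by simp)]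

theorem lintegral_enorm_le_add_rpow_mul_rpow [CompleteSpace E] (hw : Measurable w)
    (hI : ∫⁻ s in Ioo (0 : ℝ) 1, ENNReal.ofReal (1 - s) ^ 2 / ∫⁻ r in Ioo s 1, w r ≠ ∞)
    {f : ℂ → E} (hf : DifferentiableOn ℂ f (Metric.ball 0 1))
    (hf_energy : ∫⁻ z in Metric.ball (0 : ℂ) 1, ‖deriv f z‖ₑ ^ 2 * w ‖z‖ ≠ ∞) :
    ∫⁻ t in Ioo (0 : ℝ) 1, ‖f t‖ₑ ≤ ‖f 0‖ₑ +
      (∫⁻ s in Ioo (0 : ℝ) 1, ENNReal.ofReal (1 - s) ^ 2 / ∫⁻ r in Ioo s 1, w r) ^ (1 / 2 : ℝ) *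
      (2⁻¹ * ∫⁻ z in Metric.ball (0 : ℂ) 1, ‖deriv f z‖ₑ ^ 2 * w ‖z‖) ^ (1 / 2 : ℝ) := by
  have hasDerivAt_radius {t : ℝ} (ht : t ∈ Ico (0 : ℝ) 1) :
      HasDerivAt (fun t : ℝ ↦ f t) (deriv f t) t := by
    refine hasDerivAt_comp_ofReal (hf.hasDerivAt (Metric.isOpen_ball.mem_nhds ?_))
    exact ofReal_mem_ball_zero (by rw [abs_of_nonneg ht.1]; exact ht.2)
  have energy_le := lintegral_enorm_sq_mul_lintegral_Ioo_le hw (hf.deriv Metric.isOpen_ball)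
  have measurable_deriv_radius :
      AEMeasurable (fun s : ℝ ↦ ‖deriv f s‖ₑ) (volume.restrict (Ioo 0 1)) :=
    (aestronglyMeasurable_comp_ofReal (hf.deriv Metric.isOpen_ball).continuousOn).enorm
  have measurable_tail : Measurable fun s ↦ ∫⁻ r in Ioo s 1, w r :=
    Antitone.measurable fun s t hst ↦ lintegral_mono_set (Ioo_subset_Ioo_left hst)
  calc ∫⁻ t in Ioo (0 : ℝ) 1, ‖f t‖ₑ
      ≤ ENNReal.ofReal (1 - 0) * ‖f (0 : ℝ)‖ₑ +
          ∫⁻ s in Ioo (0 : ℝ) 1, ENNReal.ofReal (1 - s) * ‖deriv (fun t : ℝ ↦ f t) s‖ₑ :=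
        lintegral_enorm_le_add_lintegral_mul_enorm_deriv
          (fun t ht ↦ (hasDerivAt_radius ht).continuousAt.continuousWithinAt)
          (fun t ht ↦ (hasDerivAt_radius (Ioo_subset_Ico_self ht)).differentiableAt
            |>.differentiableWithinAt)
    _ = ‖f 0‖ₑ + ∫⁻ s in Ioo (0 : ℝ) 1, ENNReal.ofReal (1 - s) * ‖deriv f s‖ₑ := by
        rw [sub_zero, ENNReal.ofReal_one, one_mul, Complex.ofReal_zero]
        congr 1
        refine setLIntegral_congr_fun measurableSet_Ioo fun s hs ↦ ?_
        simp only [(hasDerivAt_radius (Ioo_subset_Ico_self hs)).deriv]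
    _ ≤ _ := by
        gcongr
        refine (lintegral_mul_le_rpow_lintegral_sq_div_mul (by fun_prop) measurable_deriv_radius
          measurable_tail.aemeasurable hI
          (energy_le.trans_lt (ENNReal.mul_lt_top (by simp) hf_energy.lt_top)).ne).trans ?_
        gcongr

theorem statement0_general [CompleteSpace E] (hw : Measurable w)
    (hI : ∫⁻ s in Ioo (0 : ℝ) 1, ENNReal.ofReal (1 - s) ^ 2 / ∫⁻ r in Ioo s 1, w r < ∞) :
    ∃ C : ℝ, 0 < C ∧ ∀ f : ℂ → E, DifferentiableOn ℂ f (Metric.ball 0 1) →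
      ∫⁻ t in Ioo (0 : ℝ) 1, ‖f t‖ₑ ≤
        ENNReal.ofReal C * dirichletNormSq w f ^ (1 / 2 : ℝ) := by
  set I := ∫⁻ s in Ioo (0 : ℝ) 1, ENNReal.ofReal (1 - s) ^ 2 / ∫⁻ r in Ioo s 1, w r
  have hK : (I * ENNReal.ofReal π) ^ (1 / 2 : ℝ) ≠ ∞ :=
    ENNReal.rpow_ne_top_of_nonneg (by norm_num) (ENNReal.mul_ne_top hI.ne ENNReal.ofReal_ne_top)
  refine ⟨1 + ((I * ENNReal.ofReal π) ^ (1 / 2 : ℝ)).toReal, by positivity, fun f hf ↦ ?_⟩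
  rw [ENNReal.ofReal_add zero_le_one ENNReal.toReal_nonneg, ENNReal.ofReal_one,
    ENNReal.ofReal_toReal hK, add_mul, one_mul]
  rcases eq_or_ne (dirichletNormSq w f) ∞ with htop | htop
  · simp [htop]
  have energy_le : ∫⁻ z in Metric.ball (0 : ℂ) 1, ‖deriv f z‖ₑ ^ 2 * w ‖z‖ ≤
      ENNReal.ofReal π * dirichletNormSq w f := lintegral_enorm_deriv_sq_mul_le_dirichletNormSq w f
  refine (lintegral_enorm_le_add_rpow_mul_rpow hw hI.ne hf (ne_top_of_le_ne_top
    (ENNReal.mul_ne_top ENNReal.ofReal_ne_top htop) energy_le)).trans (add_le_add ?_ ?_)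
  · exact enorm_apply_zero_le_rpow_dirichletNormSq w f
  · rw [ENNReal.mul_rpow_of_nonneg I (ENNReal.ofReal π) (by norm_num), mul_assoc,
      ← ENNReal.mul_rpow_of_nonneg (ENNReal.ofReal π) _ (by norm_num)]
    gcongr _ * ?_ ^ _
    exact (mul_le_of_le_one_left' (ENNReal.inv_le_one.2 one_le_two)).trans energy_le

end Dirichlet

namespace RadialWeight

variable {v : ℝ → ℝ} {s : ℝ}

lemma intervalIntegrable (hv : RadialWeight v) (hs : s ∈ Ico (0 : ℝ) 1) :
    IntervalIntegrable v volume s 1 :=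
  (intervalIntegrable_iff_integrableOn_Ioo_of_le hs.2.le).2
    (hv.2.2.mono_set (Ioo_subset_Ioo_left hs.1))

lemma hatw_pos (hv : RadialWeight v) (hs : s ∈ Ico (0 : ℝ) 1) : 0 < hatw v s :=
  intervalIntegral.intervalIntegral_pos_of_pos_on (hv.intervalIntegrable hs)
    (fun r hr ↦ hv.2.1 r ⟨hs.1.trans hr.1.le, hr.2⟩) hs.2

lemma ofReal_hatw (hv : RadialWeight v) (hs : s ∈ Ico (0 : ℝ) 1) :
    ENNReal.ofReal (hatw v s) = ∫⁻ r in Ioo s 1, ENNReal.ofReal (v r) := by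
  rw [hatw, intervalIntegral.integral_of_le hs.2.le, integral_Ioc_eq_integral_Ioo]
  refine ofReal_integral_eq_lintegral_ofReal
    ((intervalIntegrable_iff_integrableOn_Ioo_of_le hs.2.le).1 (hv.intervalIntegrable hs)) ?_
  filter_upwards [ae_restrict_mem measurableSet_Ioo] with r hr
  exact (hv.2.1 r ⟨hs.1.trans hr.1.le, hr.2⟩).le

lemma ofReal_one_sub_sq_div_hatw (hv : RadialWeight v) (hs : s ∈ Ico (0 : ℝ) 1) :
    ENNReal.ofReal ((1 - s) ^ 2 / hatw v s) =
      ENNReal.ofReal (1 - s) ^ 2 / ∫⁻ r in Ioo s 1, ENNReal.ofReal (v r) := by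
  rw [ENNReal.ofReal_div_of_pos (hv.hatw_pos hs), ENNReal.ofReal_pow (sub_nonneg.2 hs.2.le),
    hv.ofReal_hatw hs]

end RadialWeight

/-- Lemma 2.3 (well-definedness): if `∫_0^1 (1-s)^2/v̂(s) ds < ∞` then
`∫_0^1 |f(t)| dt ≤ C ‖f‖_{D_v}` for every `f` analytic on the unit disc. -/
theorem statement0 (v : ℝ → ℝ) (hv : RadialWeight v)
    (hvg2 : ∫⁻ s in Set.Ioo (0:ℝ) 1, ENNReal.ofReal ((1-s)^2 / hatw v s) < ⊤) :
    ∃ C : ℝ, 0 < C ∧ ∀ f : ℂ → ℂ, DifferentiableOn ℂ f (Metric.ball 0 1) →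
      ∫⁻ t in Set.Ioo (0:ℝ) 1, (‖f (t:ℂ)‖₊ : ENNReal) ≤
        ENNReal.ofReal C * (DvSq v f) ^ (1/2 : ℝ) := by
  rw [setLIntegral_congr_fun measurableSet_Ioo fun s hs ↦
    hv.ofReal_one_sub_sq_div_hatw (Ioo_subset_Ico_self hs)] at hvg2
  exact statement0_general hv.1.ennreal_ofReal hvg2

end
end

section
/- Let v be a radial weight satisfying M₁(v) = sup_{0<r<1} (∫_r¹ v̂(s)/(1-s)² ds)^{1/2} (∫₀^r 1/v̂(s) ds)^{1/2} < ∞. Then there exists C = C(v) > 0 such that for every function f analytic on the unit disc 𝔻, ∫₀¹ M_∞(s,f)² · v̂(s)/(1-s)² ds ≤ C · M₁(v)² · ‖f‖²_{D_v}. -/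
open MeasureTheory Real Set Filter

noncomputable section

open scoped ENNReal NNReal

/-!
The Taylor coefficients of `f'` produce a majorant `G t = ∑ |a n| tⁿ` of `|f'|` on the circle
`|z| = t`, so that `M_∞(s, f) ≤ |f 0| + ∫_0^s G`. The contribution of `|f 0|` is absorbed in the
constant, because `v̂ / (1 - s)²` is integrable and `M₁(v) > 0`. For the other term, the finiteness
of `M₁(v)` is Muckenhoupt's condition for the weighted Hardy inequality
`∫ (∫_0^s G)² v̂(s) / (1 - s)² ds ≲ M₁(v)² ∫ G² v̂`. By Tonelli, `∫ G² v̂ = ∫ v(s) (∫_0^s G²) ds`;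
Hilbert's inequality bounds `∫_0^s G²` by `s ∑ |a n|² s²ⁿ`, which by Parseval is `s` times the
mean of `|f'|²` over `|z| = s`, and integration in polar coordinates gives the Dirichlet integral.
-/

lemma rpow_half_sq (x : ℝ≥0∞) : (x ^ (1 / 2 : ℝ)) ^ 2 = x := by
  rw [← ENNReal.rpow_natCast, ← ENNReal.rpow_mul]
  norm_num

lemma ennreal_add_sq_le (a b : ℝ≥0∞) : (a + b) ^ 2 ≤ 2 * a ^ 2 + 2 * b ^ 2 := by
  have h := ENNReal.rpow_add_le_mul_rpow_add_rpow a b one_le_two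
  norm_num [mul_add] at h
  exact h

lemma setLIntegral_Ioo_ofReal_ne_zero {a b : ℝ} (hab : a < b) {φ : ℝ → ℝ}
    (hφ : ContinuousOn φ (Ioo a b)) (hpos : ∀ x ∈ Ioo a b, 0 < φ x) :
    ∫⁻ x in Ioo a b, ENNReal.ofReal (φ x) ≠ 0 := by
  intro h
  have hzero := (lintegral_eq_zero_iff' (hφ.aemeasurable measurableSet_Ioo).ennreal_ofReal).1 h
  have : (ae (volume.restrict (Ioo a b))).NeBot := ae_restrict_neBot.2 (by simpa using hab)
  obtain ⟨x, hx, hmem⟩ := (hzero.and (ae_restrict_mem measurableSet_Ioo)).exists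
  exact (ENNReal.ofReal_pos.2 (hpos x hmem)).ne' hx

lemma sq_lintegral_le {α : Type*} [MeasurableSpace α] (μ : Measure α) {h p : α → ℝ≥0∞}
    (hh : AEMeasurable h μ) (hp : AEMeasurable p μ) (hp0 : ∀ᵐ t ∂μ, p t ≠ 0)
    (hptop : ∀ᵐ t ∂μ, p t ≠ ⊤) :
    (∫⁻ t, h t ∂μ) ^ 2 ≤ (∫⁻ t, h t ^ 2 * p t ∂μ) * ∫⁻ t, (p t)⁻¹ ∂μ := by
  have hsplit : ∫⁻ t, h t ∂μ =
      ∫⁻ t, ((fun t => h t * p t ^ (1 / 2 : ℝ)) * fun t => (p t)⁻¹ ^ (1 / 2 : ℝ)) t ∂μ := by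
    refine lintegral_congr_ae ?_
    filter_upwards [hp0, hptop] with t h0 htop
    rw [Pi.mul_apply, mul_assoc, ← ENNReal.mul_rpow_of_nonneg _ _ (by norm_num),
      ENNReal.mul_inv_cancel h0 htop, ENNReal.one_rpow, mul_one]
  rw [hsplit]
  refine (pow_le_pow_left' (ENNReal.lintegral_mul_le_Lp_mul_Lq μ HolderConjugate.two_two
    (hh.mul (hp.pow_const _)) (hp.inv.pow_const _)) 2).trans_eq ?_
  simp only [Pi.mul_apply, Pi.inv_apply, mul_pow, rpow_half_sq, ENNReal.rpow_two]

section Hardy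

variable {α : Type*} [MeasurableSpace α] [TopologicalSpace α] [LinearOrder α] [OrderTopology α]
  [BorelSpace α]

lemma measurable_measure_Iic (μ : Measure α) : Measurable fun t => μ (Iic t) :=
  Monotone.measurable fun _ _ h => measure_mono (Iic_subset_Iic.2 h)

lemma measure_setOf_measure_Iic_le (μ : Measure α) [IsFiniteMeasure μ]
    [μ.InnerRegularCompactLTTop] (c : ℝ≥0∞) : μ {t | μ (Iic t) ≤ c} ≤ c := by
  rw [(measurableSet_le (measurable_measure_Iic μ)
    measurable_const).measure_eq_iSup_isCompact_of_ne_top (measure_ne_top _ _)]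
  refine iSup₂_le fun K hK => iSup_le fun hKc => ?_
  rcases K.eq_empty_or_nonempty with rfl | hne
  · simp
  obtain ⟨t, htK, ht⟩ := hKc.exists_isGreatest hne
  exact (measure_mono ht).trans (hK htK)

lemma setLIntegral_Ioi_min_rpow_le {m p : ℝ} (hm : 0 < m) (hp : p ∈ Ioo (0 : ℝ) 1) :
    ∫⁻ l in Ioi (0 : ℝ), min (ENNReal.ofReal m) (ENNReal.ofReal (l ^ (-p⁻¹))) ≤
      ENNReal.ofReal (m ^ (1 - p) / (1 - p)) := by
  obtain ⟨hp0, hp1⟩ := hp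
  have hq : -p⁻¹ < -1 := neg_lt_neg ((one_lt_inv₀ hp0).2 hp1)
  have ha : 0 < m ^ (-p) := rpow_pos_of_pos hm _
  have hpow : (m ^ (-p)) ^ (-p⁻¹ + 1) = m ^ (1 - p) := by
    rw [← rpow_mul hm.le]
    congr 1
    field_simp
    ring
  have htail : ∫⁻ l in Ioi (m ^ (-p)), ENNReal.ofReal (l ^ (-p⁻¹)) =
      ENNReal.ofReal (p / (1 - p) * m ^ (1 - p)) := by
    rw [← ofReal_integral_eq_lintegral_ofReal (integrableOn_Ioi_rpow_of_lt hq ha),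
      integral_Ioi_rpow_of_lt hq ha, hpow]
    · have hexp : -p⁻¹ + 1 = -((1 - p) / p) := by field_simp; ring
      rw [hexp, neg_div_neg_eq, div_div_eq_mul_div, div_mul_eq_mul_div, mul_comm p]
    · filter_upwards [ae_restrict_mem measurableSet_Ioi] with l hl
      exact rpow_nonneg (ha.le.trans hl.le) _
  calc ∫⁻ l in Ioi (0 : ℝ), min (ENNReal.ofReal m) (ENNReal.ofReal (l ^ (-p⁻¹)))
      ≤ (∫⁻ _ in Ioc 0 (m ^ (-p)), ENNReal.ofReal m) +
          ∫⁻ l in Ioi (m ^ (-p)), ENNReal.ofReal (l ^ (-p⁻¹)) := by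
        rw [← Ioc_union_Ioi_eq_Ioi ha.le]
        refine (lintegral_union_le _ _ _).trans ?_
        gcongr
        · exact min_le_left _ _
        · exact min_le_right _ _
    _ = ENNReal.ofReal (m ^ (1 - p)) + ENNReal.ofReal (p / (1 - p) * m ^ (1 - p)) := by
        rw [htail, setLIntegral_const, Real.volume_Ioc, ← ENNReal.ofReal_mul hm.le, sub_zero,
          ← rpow_one_add' hm.le (by linarith), sub_eq_add_neg]
    _ = ENNReal.ofReal (m ^ (1 - p) / (1 - p)) := by
        have : 0 < 1 - p := by linarith
        rw [← ENNReal.ofReal_add (by positivity) (by positivity)]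
        congr 1
        field_simp
        ring

lemma measure_setOf_lt_measureReal_Iic_rpow_le (μ : Measure α) [IsFiniteMeasure μ]
    [μ.InnerRegularCompactLTTop] {p l : ℝ} (hp : 0 < p) (hl : 0 < l) :
    μ {t | l < μ.real (Iic t) ^ (-p)} ≤ ENNReal.ofReal (l ^ (-p⁻¹)) := by
  refine (measure_mono fun t (ht : l < _) => ?_).trans (measure_setOf_measure_Iic_le μ _)
  have h0 : 0 < μ.real (Iic t) := by
    refine measureReal_nonneg.lt_of_ne' fun h => ?_
    rw [h, zero_rpow (neg_ne_zero.2 hp.ne')] at ht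
    exact lt_asymm hl ht
  rw [mem_ofPred_eq, ← ofReal_measureReal]
  refine ENNReal.ofReal_le_ofReal ?_
  calc μ.real (Iic t) = (μ.real (Iic t) ^ (-p)) ^ (-p⁻¹) := by
        rw [← rpow_mul h0.le, neg_mul_neg, mul_inv_cancel₀ hp.ne', rpow_one]
    _ ≤ l ^ (-p⁻¹) := rpow_le_rpow_of_nonpos hl ht.le (by simpa using hp.le)

lemma lintegral_rpow_neg_measure_Iic_le (μ : Measure α) [IsFiniteMeasure μ]
    [μ.InnerRegularCompactLTTop] {p : ℝ} (hp : p ∈ Ioo (0 : ℝ) 1) :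
    ∫⁻ t, μ (Iic t) ^ (-p) ∂μ ≤ ENNReal.ofReal (1 - p)⁻¹ * μ univ ^ (1 - p) := by
  rcases eq_or_ne μ 0 with rfl | hμ
  · simp
  have hm : 0 < μ.real univ := by
    have : NeZero μ := ⟨hμ⟩
    exact measureReal_univ_pos
  have hpos : ∀ᵐ t ∂μ, μ (Iic t) ≠ 0 := by
    simpa [ae_iff] using measure_setOf_measure_Iic_le μ 0
  have hreal : ∀ᵐ t ∂μ, μ (Iic t) ^ (-p) = ENNReal.ofReal (μ.real (Iic t) ^ (-p)) := by
    filter_upwards [hpos] with t ht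
    have h0 : 0 < μ.real (Iic t) := ENNReal.toReal_pos ht (measure_ne_top _ _)
    rw [← ENNReal.ofReal_rpow_of_pos h0, ofReal_measureReal]
  calc ∫⁻ t, μ (Iic t) ^ (-p) ∂μ = ∫⁻ t, ENNReal.ofReal (μ.real (Iic t) ^ (-p)) ∂μ :=
        lintegral_congr_ae hreal
    _ = ∫⁻ l in Ioi (0 : ℝ), μ {t | l < μ.real (Iic t) ^ (-p)} :=
        lintegral_eq_lintegral_meas_lt μ (ae_of_all _ fun t => by positivity)
          ((measurable_measure_Iic μ).ennreal_toReal.pow_const _).aemeasurable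
    _ ≤ ∫⁻ l in Ioi (0 : ℝ),
          min (ENNReal.ofReal (μ.real univ)) (ENNReal.ofReal (l ^ (-p⁻¹))) :=
        setLIntegral_mono' measurableSet_Ioi fun l hl =>
          le_min (by simpa using measure_mono (subset_univ _))
            (measure_setOf_lt_measureReal_Iic_rpow_le μ hp.1 hl)
    _ ≤ ENNReal.ofReal (μ.real univ ^ (1 - p) / (1 - p)) := setLIntegral_Ioi_min_rpow_le hm hp
    _ = ENNReal.ofReal (1 - p)⁻¹ * μ univ ^ (1 - p) := by
        rw [div_eq_inv_mul, ENNReal.ofReal_mul (inv_nonneg.2 (by linarith [hp.2])),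
          ← ENNReal.ofReal_rpow_of_pos hm, ofReal_measureReal]

lemma measure_setOf_measure_Ici_le (μ : Measure α) [hfin : IsFiniteMeasure μ]
    [hreg : μ.InnerRegularCompactLTTop] (c : ℝ≥0∞) : μ {t | μ (Ici t) ≤ c} ≤ c :=
  @measure_setOf_measure_Iic_le αᵒᵈ _ _ _ _ _ μ hfin hreg c

lemma lintegral_rpow_neg_measure_Ici_le (μ : Measure α) [hfin : IsFiniteMeasure μ]
    [hreg : μ.InnerRegularCompactLTTop] {p : ℝ} (hp : p ∈ Ioo (0 : ℝ) 1) :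
    ∫⁻ t, μ (Ici t) ^ (-p) ∂μ ≤ ENNReal.ofReal (1 - p)⁻¹ * μ univ ^ (1 - p) :=
  @lintegral_rpow_neg_measure_Iic_le αᵒᵈ _ _ _ _ _ μ hfin hreg p hp

lemma lintegral_mul_setLIntegral_Iic [SecondCountableTopology α] (μ ν : Measure α)
    [SFinite μ] [SFinite ν]
    {a b : α → ℝ≥0∞} (ha : AEMeasurable a μ) (hb : AEMeasurable b ν) :
    ∫⁻ s, a s * ∫⁻ t in Iic s, b t ∂ν ∂μ = ∫⁻ t, b t * ∫⁻ s in Ici t, a s ∂μ ∂ν := by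
  have hab : AEMeasurable (fun z : α × α => {z | z.2 ≤ z.1}.indicator (fun z => a z.1 * b z.2) z)
      (μ.prod ν) :=
    (ha.comp_fst.mul hb.comp_snd).indicator (measurableSet_le measurable_snd measurable_fst)
  calc ∫⁻ s, a s * ∫⁻ t in Iic s, b t ∂ν ∂μ
      = ∫⁻ s, ∫⁻ t, {z : α × α | z.2 ≤ z.1}.indicator (fun z => a z.1 * b z.2) (s, t) ∂ν ∂μ := by
        refine lintegral_congr fun s => ?_
        rw [← lintegral_const_mul'' _ hb.restrict, ← lintegral_indicator measurableSet_Iic]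
        rfl
    _ = ∫⁻ t, ∫⁻ s, {z : α × α | z.2 ≤ z.1}.indicator (fun z => a z.1 * b z.2) (s, t) ∂μ ∂ν :=
        lintegral_lintegral_swap hab
    _ = ∫⁻ t, b t * ∫⁻ s in Ici t, a s ∂μ ∂ν := by
        refine lintegral_congr fun t => ?_
        rw [← lintegral_const_mul'' _ ha.restrict, ← lintegral_indicator measurableSet_Ici]
        simp only [mul_comm (b t)]
        rfl

variable [PolishSpace α]

lemma ae_measure_Ici_ne_zero (μ : Measure α) [SFinite μ] :
    ∀ᵐ s ∂μ, μ (Ici s) ≠ 0 := by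
  rw [← sum_sfiniteSeq μ, ae_iff]
  simp only [not_not]
  refine Measure.sum_apply_eq_zero.2 fun n => ?_
  refine measure_mono_null (fun s hs => ?_)
    (nonpos_iff_eq_zero.1 (measure_setOf_measure_Ici_le (sfiniteSeq μ n) 0))
  exact (Measure.sum_apply_eq_zero.1 hs n).le

lemma sq_setLIntegral_Iic_le (ν : Measure α) {h : α → ℝ≥0∞}
    (hh : AEMeasurable h ν) {s : α} (hs : ν (Iic s) ≠ ⊤) :
    (∫⁻ t in Iic s, h t ∂ν) ^ 2 ≤
      2 * ν (Iic s) ^ (1 / 2 : ℝ) * ∫⁻ t in Iic s, h t ^ 2 * ν (Iic t) ^ (1 / 2 : ℝ) ∂ν := by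
  have : IsFiniteMeasure (ν.restrict (Iic s)) := ⟨by simpa using hs.lt_top⟩
  have hrestrict : ∀ t ∈ Iic s, ν.restrict (Iic s) (Iic t) = ν (Iic t) := fun t ht => by
    rw [Measure.restrict_apply measurableSet_Iic, inter_eq_left.2 (Iic_subset_Iic.2 ht)]
  have hmem : ∀ᵐ t ∂ν.restrict (Iic s), t ∈ Iic s := ae_restrict_mem measurableSet_Iic
  have hne_zero : ∀ᵐ t ∂ν.restrict (Iic s), ν (Iic t) ≠ 0 := by
    have hnull := measure_setOf_measure_Iic_le (ν.restrict (Iic s)) 0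
    filter_upwards [hmem, measure_eq_zero_iff_ae_notMem.1 (nonpos_iff_eq_zero.1 hnull)]
      with t ht hpos h0
    exact hpos ((hrestrict t ht).trans h0).le
  have hinv : ∫⁻ t in Iic s, (ν (Iic t) ^ (1 / 2 : ℝ))⁻¹ ∂ν ≤ 2 * ν (Iic s) ^ (1 / 2 : ℝ) := by
    calc ∫⁻ t in Iic s, (ν (Iic t) ^ (1 / 2 : ℝ))⁻¹ ∂ν
        = ∫⁻ t in Iic s, ν.restrict (Iic s) (Iic t) ^ (-(1 / 2) : ℝ) ∂ν := by
          refine lintegral_congr_ae (hmem.mono fun t ht => ?_)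
          simp only [hrestrict t ht, ENNReal.rpow_neg]
      _ ≤ 2 * ν (Iic s) ^ (1 / 2 : ℝ) := by
          refine (lintegral_rpow_neg_measure_Iic_le _ (by norm_num)).trans_eq ?_
          norm_num
  refine (sq_lintegral_le _ hh.restrict
    ((measurable_measure_Iic ν).pow_const (1 / 2 : ℝ)).aemeasurable ?_ ?_).trans ?_
  · exact hne_zero.mono fun t ht => (ENNReal.rpow_pos_of_nonneg ht.bot_lt (by norm_num)).ne'
  · exact hmem.mono fun t ht => ENNReal.rpow_ne_top_of_nonneg (by norm_num)
      (measure_ne_top_of_subset (Iic_subset_Iic.2 ht) hs)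
  · rw [mul_comm]
    gcongr

lemma rpow_mul_setLIntegral_Ici_le (μ ν : Measure α) {B : ℝ≥0}
    (hB : ∀ r, μ (Ici r) * ν (Iic r) ≤ B) (t : α) :
    ν (Iic t) ^ (1 / 2 : ℝ) * ∫⁻ s in Ici t, ν (Iic s) ^ (1 / 2 : ℝ) ∂μ ≤ 2 * B := by
  rcases eq_or_ne (ν (Iic t)) 0 with hν | hν
  · simp [hν]
  have hμ : μ (Ici t) ≠ ⊤ := fun h => by simpa [h, hν] using hB t
  have : IsFiniteMeasure (μ.restrict (Ici t)) := ⟨by simpa using hμ.lt_top⟩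
  have hbound : ∀ᵐ s ∂μ.restrict (Ici t), ν (Iic s) ^ (1 / 2 : ℝ) ≤
      B ^ (1 / 2 : ℝ) * μ.restrict (Ici t) (Ici s) ^ (-(1 / 2) : ℝ) := by
    filter_upwards [ae_restrict_mem measurableSet_Ici,
      ae_measure_Ici_ne_zero (μ.restrict (Ici t))] with s hs h0
    rw [Measure.restrict_apply measurableSet_Ici, inter_eq_left.2 (Ici_subset_Ici.2 hs)] at h0 ⊢
    have htop := measure_ne_top_of_subset (Ici_subset_Ici.2 hs) hμ
    rw [ENNReal.rpow_neg, ← ENNReal.inv_rpow, ← ENNReal.mul_rpow_of_nonneg _ _ (by norm_num)]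
    gcongr
    rw [← div_eq_mul_inv, ENNReal.le_div_iff_mul_le (.inl h0) (.inl htop), mul_comm]
    exact hB s
  calc ν (Iic t) ^ (1 / 2 : ℝ) * ∫⁻ s in Ici t, ν (Iic s) ^ (1 / 2 : ℝ) ∂μ
      ≤ ν (Iic t) ^ (1 / 2 : ℝ) * (B ^ (1 / 2 : ℝ) * (2 * μ (Ici t) ^ (1 / 2 : ℝ))) := by
        gcongr
        refine (lintegral_mono_ae hbound).trans ?_
        rw [lintegral_const_mul' _ _ (by simp)]
        gcongr
        refine (lintegral_rpow_neg_measure_Ici_le _ (by norm_num)).trans_eq ?_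
        norm_num
    _ = 2 * B ^ (1 / 2 : ℝ) * (μ (Ici t) * ν (Iic t)) ^ (1 / 2 : ℝ) := by
        rw [ENNReal.mul_rpow_of_nonneg _ _ (by norm_num)]
        ring
    _ ≤ 2 * B ^ (1 / 2 : ℝ) * B ^ (1 / 2 : ℝ) := by
        gcongr
        exact hB t
    _ = 2 * B := by rw [mul_assoc, ← sq, rpow_half_sq]

theorem lintegral_sq_setLIntegral_Iic_le (μ ν : Measure α) [SFinite μ] [SFinite ν]
    {B : ℝ≥0} (hB : ∀ r, μ (Ici r) * ν (Iic r) ≤ B) {h : α → ℝ≥0∞} (hh : AEMeasurable h ν) :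
    ∫⁻ s, (∫⁻ t in Iic s, h t ∂ν) ^ 2 ∂μ ≤ 4 * B * ∫⁻ t, h t ^ 2 ∂ν := by
  have hN := (measurable_measure_Iic ν).pow_const (1 / 2 : ℝ)
  have hfin : ∀ᵐ s ∂μ, ν (Iic s) ≠ ⊤ := by
    filter_upwards [ae_measure_Ici_ne_zero μ] with s hs htop
    simpa [htop, hs] using hB s
  calc ∫⁻ s, (∫⁻ t in Iic s, h t ∂ν) ^ 2 ∂μ
      ≤ ∫⁻ s, 2 * ν (Iic s) ^ (1 / 2 : ℝ) *
          ∫⁻ t in Iic s, h t ^ 2 * ν (Iic t) ^ (1 / 2 : ℝ) ∂ν ∂μ :=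
        lintegral_mono_ae (hfin.mono fun s hs => sq_setLIntegral_Iic_le ν hh hs)
    _ = ∫⁻ t, h t ^ 2 * ν (Iic t) ^ (1 / 2 : ℝ) *
          ∫⁻ s in Ici t, 2 * ν (Iic s) ^ (1 / 2 : ℝ) ∂μ ∂ν :=
        lintegral_mul_setLIntegral_Iic μ ν (hN.const_mul 2).aemeasurable
          ((hh.pow_const 2).mul hN.aemeasurable)
    _ ≤ ∫⁻ t, 4 * B * h t ^ 2 ∂ν := by
        refine lintegral_mono fun t => ?_
        rw [lintegral_const_mul _ hN]
        calc h t ^ 2 * ν (Iic t) ^ (1 / 2 : ℝ) *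
              (2 * ∫⁻ s in Ici t, ν (Iic s) ^ (1 / 2 : ℝ) ∂μ)
            = 2 * h t ^ 2 *
              (ν (Iic t) ^ (1 / 2 : ℝ) * ∫⁻ s in Ici t, ν (Iic s) ^ (1 / 2 : ℝ) ∂μ) := by ring
          _ ≤ 2 * h t ^ 2 * (2 * B) := by
              exact mul_le_mul_right (rpow_mul_setLIntegral_Ici_le μ ν hB t) _
          _ = 4 * B * h t ^ 2 := by ring
    _ = 4 * B * ∫⁻ t, h t ^ 2 ∂ν := lintegral_const_mul' _ _ (by finiteness)

end Hardy

section Interval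

lemma restrict_Ioo_restrict_Iic {a b s : ℝ} (hs : s ∈ Ioo a b) :
    (volume.restrict (Ioo a b)).restrict (Iic s) = volume.restrict (Ioo a s) := by
  have : Iic s ∩ Ioo a b = Ioc a s := by grind
  rw [Measure.restrict_restrict measurableSet_Iic, this, Measure.restrict_congr_set Ioo_ae_eq_Ioc]

lemma restrict_Ioo_restrict_Ici {a b s : ℝ} (hs : s ∈ Ioo a b) :
    (volume.restrict (Ioo a b)).restrict (Ici s) = volume.restrict (Ioo s b) := by
  have : Ici s ∩ Ioo a b = Ico s b := by grind
  rw [Measure.restrict_restrict measurableSet_Ici, this, Measure.restrict_congr_set Ioo_ae_eq_Ico]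

lemma setLIntegral_Ioo_mul_setLIntegral_Ioo {a b : ℝ} {φ ψ : ℝ → ℝ≥0∞}
    (hφ : AEMeasurable φ (volume.restrict (Ioo a b)))
    (hψ : AEMeasurable ψ (volume.restrict (Ioo a b))) :
    ∫⁻ s in Ioo a b, φ s * ∫⁻ t in Ioo a s, ψ t =
      ∫⁻ t in Ioo a b, ψ t * ∫⁻ s in Ioo t b, φ s := by
  calc ∫⁻ s in Ioo a b, φ s * ∫⁻ t in Ioo a s, ψ t
      = ∫⁻ s in Ioo a b, φ s * ∫⁻ t in Iic s, ψ t ∂volume.restrict (Ioo a b) :=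
        setLIntegral_congr_fun measurableSet_Ioo fun s hs => by rw [restrict_Ioo_restrict_Iic hs]
    _ = ∫⁻ t in Ioo a b, ψ t * ∫⁻ s in Ici t, φ s ∂volume.restrict (Ioo a b) :=
        lintegral_mul_setLIntegral_Iic _ _ hφ hψ
    _ = ∫⁻ t in Ioo a b, ψ t * ∫⁻ s in Ioo t b, φ s :=
        setLIntegral_congr_fun measurableSet_Ioo fun t ht => by rw [restrict_Ioo_restrict_Ici ht]

lemma withDensity_Ici_mul_withDensity_Iic_le {a b : ℝ} {w q : ℝ → ℝ≥0∞} {B : ℝ≥0∞}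
    (hB : ∀ r ∈ Ioo a b, (∫⁻ s in Ioo r b, w s) * ∫⁻ s in Ioo a r, q s ≤ B) (r : ℝ) :
    (volume.restrict (Ioo a b)).withDensity w (Ici r) *
      (volume.restrict (Ioo a b)).withDensity q (Iic r) ≤ B := by
  rw [withDensity_apply _ measurableSet_Ici, withDensity_apply _ measurableSet_Iic]
  by_cases hr : r ∈ Ioo a b
  · rw [restrict_Ioo_restrict_Iic hr, restrict_Ioo_restrict_Ici hr]
    exact hB r hr
  · rw [Measure.restrict_restrict measurableSet_Ici, Measure.restrict_restrict measurableSet_Iic]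
    rcases not_and_or.1 hr with har | hrb
    · have : Iic r ∩ Ioo a b = ∅ := by grind
      simp [this]
    · have : Ici r ∩ Ioo a b = ∅ := by grind
      simp [this]

theorem setLIntegral_mul_sq_setLIntegral_Ioo_le {a b : ℝ} {w q g : ℝ → ℝ≥0∞} {B : ℝ≥0}
    (hw : AEMeasurable w (volume.restrict (Ioo a b)))
    (hq : AEMeasurable q (volume.restrict (Ioo a b)))
    (hg : AEMeasurable g (volume.restrict (Ioo a b)))
    (hq0 : ∀ t ∈ Ioo a b, q t ≠ 0) (hqtop : ∀ t ∈ Ioo a b, q t ≠ ⊤)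
    (hB : ∀ r ∈ Ioo a b, (∫⁻ s in Ioo r b, w s) * ∫⁻ s in Ioo a r, q s ≤ B) :
    ∫⁻ s in Ioo a b, w s * (∫⁻ t in Ioo a s, g t) ^ 2 ≤
      4 * B * ∫⁻ t in Ioo a b, g t ^ 2 * (q t)⁻¹ := by
  set m : Measure ℝ := volume.restrict (Ioo a b)
  have hh : AEMeasurable (fun t => g t * (q t)⁻¹) m := hg.mul hq.inv
  have hinner : ∀ s ∈ Ioo a b,
      ∫⁻ t in Iic s, g t * (q t)⁻¹ ∂m.withDensity q = ∫⁻ t in Ioo a s, g t := by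
    intro s hs
    rw [setLIntegral_withDensity_eq_lintegral_mul₀ hq hh measurableSet_Iic,
      restrict_Ioo_restrict_Iic hs]
    refine setLIntegral_congr_fun measurableSet_Ioo fun t ht => ?_
    have htab : t ∈ Ioo a b := ⟨ht.1, ht.2.trans hs.2⟩
    rw [Pi.mul_apply, mul_left_comm, ENNReal.mul_inv_cancel (hq0 t htab) (hqtop t htab), mul_one]
  have hsq : Measurable fun s => (∫⁻ t in Iic s, g t * (q t)⁻¹ ∂m.withDensity q) ^ 2 :=
    Monotone.measurable fun s s' hss => pow_le_pow_left'
      (lintegral_mono_set (Iic_subset_Iic.2 hss)) 2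
  calc ∫⁻ s in Ioo a b, w s * (∫⁻ t in Ioo a s, g t) ^ 2
      = ∫⁻ s, (∫⁻ t in Iic s, g t * (q t)⁻¹ ∂m.withDensity q) ^ 2 ∂m.withDensity w := by
        rw [lintegral_withDensity_eq_lintegral_mul₀ hw hsq.aemeasurable]
        exact setLIntegral_congr_fun measurableSet_Ioo fun s hs => by
          rw [Pi.mul_apply, hinner s hs]
    _ ≤ 4 * B * ∫⁻ t, (g t * (q t)⁻¹) ^ 2 ∂m.withDensity q :=
        lintegral_sq_setLIntegral_Iic_le _ _ (withDensity_Ici_mul_withDensity_Iic_le hB)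
          (hh.mono_ac (withDensity_absolutelyContinuous m q))
    _ = 4 * B * ∫⁻ t in Ioo a b, g t ^ 2 * (q t)⁻¹ := by
        rw [lintegral_withDensity_eq_lintegral_mul₀ hq (hh.pow_const 2)]
        congr 1
        refine setLIntegral_congr_fun measurableSet_Ioo fun t ht => ?_
        calc q t * (g t * (q t)⁻¹) ^ 2 = g t ^ 2 * (q t)⁻¹ * (q t * (q t)⁻¹) := by ring
          _ = g t ^ 2 * (q t)⁻¹ := by
              rw [ENNReal.mul_inv_cancel (hq0 t ht) (hqtop t ht), mul_one]

end Interval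

section Hilbert

lemma two_mul_mul_le_sq_mul_add_sq_mul_inv (a b : ℝ≥0∞) {t : ℝ≥0∞} (h0 : t ≠ 0) (htop : t ≠ ⊤) :
    2 * (a * b) ≤ a ^ 2 * t + b ^ 2 * t⁻¹ := by
  have two_mul_mul_le : ∀ x y : ℝ≥0∞, 2 * (x * y) ≤ x ^ 2 + y ^ 2 := by
    intro x y
    rcases eq_or_ne x ⊤ with rfl | hx
    · simp
    rcases eq_or_ne y ⊤ with rfl | hy
    · simp
    lift x to ℝ≥0 using hx
    lift y to ℝ≥0 using hy
    norm_cast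
    exact (mul_assoc 2 x y).symm.trans_le (two_mul_le_add_sq x y)
  have hcancel : t ^ (1 / 2 : ℝ) * t⁻¹ ^ (1 / 2 : ℝ) = 1 := by
    rw [← ENNReal.mul_rpow_of_nonneg _ _ (by norm_num), ENNReal.mul_inv_cancel h0 htop,
      ENNReal.one_rpow]
  calc 2 * (a * b) = 2 * (a * t ^ (1 / 2 : ℝ) * (b * t⁻¹ ^ (1 / 2 : ℝ))) := by
        rw [mul_mul_mul_comm, hcancel, mul_one]
    _ ≤ (a * t ^ (1 / 2 : ℝ)) ^ 2 + (b * t⁻¹ ^ (1 / 2 : ℝ)) ^ 2 := two_mul_mul_le _ _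
    _ = a ^ 2 * t + b ^ 2 * t⁻¹ := by simp only [mul_pow, rpow_half_sq]

lemma tsum_tsum_sq_mul_div_mul_le {ι : Type*} {K : ι → ι → ℝ≥0∞} {p : ι → ℝ≥0∞} {C : ℝ≥0∞}
    (h0 : ∀ i, p i ≠ 0) (htop : ∀ i, p i ≠ ⊤) (hrow : ∀ i, ∑' j, K i j * p j ≤ C * p i)
    (a : ι → ℝ≥0∞) : ∑' i, ∑' j, a i ^ 2 * (p j / p i) * K i j ≤ C * ∑' i, a i ^ 2 := by
  rw [← ENNReal.tsum_mul_left]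
  refine ENNReal.tsum_le_tsum fun i => ?_
  calc ∑' j, a i ^ 2 * (p j / p i) * K i j = a i ^ 2 * (p i)⁻¹ * ∑' j, K i j * p j := by
        rw [← ENNReal.tsum_mul_left]
        exact tsum_congr fun j => by rw [div_eq_mul_inv]; ring
    _ ≤ a i ^ 2 * (p i)⁻¹ * (C * p i) := by
        gcongr
        exact hrow i
    _ = C * a i ^ 2 * ((p i)⁻¹ * p i) := by ring
    _ = C * a i ^ 2 := by rw [ENNReal.inv_mul_cancel (h0 i) (htop i), mul_one]

theorem tsum_tsum_mul_mul_le_of_schur {ι : Type*} {K : ι → ι → ℝ≥0∞} {p : ι → ℝ≥0∞} {C : ℝ≥0∞}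
    (hK : ∀ i j, K i j = K j i) (h0 : ∀ i, p i ≠ 0) (htop : ∀ i, p i ≠ ⊤)
    (hrow : ∀ i, ∑' j, K i j * p j ≤ C * p i) (a : ι → ℝ≥0∞) :
    ∑' i, ∑' j, a i * a j * K i j ≤ C * ∑' i, a i ^ 2 := by
  have hweight : ∀ i j, 2 * (a i * a j * K i j) ≤
      a i ^ 2 * (p j / p i) * K i j + a j ^ 2 * (p i / p j) * K j i := by
    intro i j
    rw [hK j i, ← add_mul, ← mul_assoc,
      ← ENNReal.inv_div (.inl (htop i)) (.inl (h0 i))]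
    gcongr
    exact two_mul_mul_le_sq_mul_add_sq_mul_inv _ _ (ENNReal.div_ne_zero.2 ⟨h0 j, htop i⟩)
      (ENNReal.div_ne_top (htop j) (h0 i))
  rw [← ENNReal.mul_le_mul_iff_right two_ne_zero ENNReal.ofNat_ne_top]
  calc 2 * ∑' i, ∑' j, a i * a j * K i j = ∑' i, ∑' j, 2 * (a i * a j * K i j) := by
        simp only [ENNReal.tsum_mul_left]
    _ ≤ ∑' i, ∑' j, (a i ^ 2 * (p j / p i) * K i j + a j ^ 2 * (p i / p j) * K j i) :=
        ENNReal.tsum_le_tsum fun i => ENNReal.tsum_le_tsum fun j => hweight i j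
    _ = ∑' i, ∑' j, a i ^ 2 * (p j / p i) * K i j +
          ∑' j, ∑' i, a j ^ 2 * (p i / p j) * K j i := by
        simp only [ENNReal.tsum_add]
        congr 1
        exact ENNReal.tsum_comm
    _ ≤ C * ∑' i, a i ^ 2 + C * ∑' i, a i ^ 2 := by
        gcongr <;> exact tsum_tsum_sq_mul_div_mul_le h0 htop hrow a
    _ = 2 * (C * ∑' i, a i ^ 2) := (two_mul _).symm

/- The right-hand side telescopes; the derivative of `x ↦ √x / (√x + √a)` is comparable to
`√a / (√x * (x + a))`. -/
lemma inv_sqrt_mul_add_le {a : ℝ} (ha : 1 ≤ a) (n : ℕ) :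
    1 / (n + a) * (1 / √(n + 1)) ≤
      8 / √a * (√(n + 1 : ℕ) / (√(n + 1 : ℕ) + √a) - √n / (√n + √a)) := by
  push_cast
  have hn : (0 : ℝ) ≤ n := n.cast_nonneg
  have hx2 : √(n : ℝ) ^ 2 = n := sq_sqrt hn
  have hy2 : √(n + 1 : ℝ) ^ 2 = n + 1 := sq_sqrt (by positivity)
  have hs2 : √a ^ 2 = a := sq_sqrt (by positivity)
  have hx : 0 ≤ √(n : ℝ) := sqrt_nonneg _
  have hy : 0 < √(n + 1 : ℝ) := sqrt_pos.2 (by positivity)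
  have hs : 0 < √a := sqrt_pos.2 (by positivity)
  have hxy : √(n : ℝ) ≤ √(n + 1 : ℝ) := sqrt_le_sqrt (by linarith)
  generalize √(n : ℝ) = x at *
  generalize √(n + 1 : ℝ) = y at *
  generalize √a = s at *
  have hdiff : y / (y + s) - x / (x + s) = s * (y - x) / ((y + s) * (x + s)) := by
    field_simp
    ring
  have hprod : (y + s) * (x + s) ≤ 4 * (n + a) := by
    calc (y + s) * (x + s) ≤ (y + s) * (y + s) := by gcongr
      _ ≤ 4 * (n + a) := by nlinarith [sq_nonneg (y - s)]
  have hstep : 1 ≤ 2 * ((y - x) * y) := by nlinarith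
  rw [hdiff]
  calc 1 / (n + a) * (1 / y) ≤ 4 / ((y + s) * (x + s)) * (2 * (y - x)) := by
        gcongr ?_ * ?_
        · rw [div_le_div_iff₀ (by positivity) (by positivity)]
          linarith
        · rw [div_le_iff₀ hy]
          linarith
    _ = 8 / s * (s * (y - x) / ((y + s) * (x + s))) := by
        field_simp
        ring

lemma tsum_hilbertKernel_mul_le (m : ℕ) :
    ∑' n : ℕ, ENNReal.ofReal (1 / (m + n + 1)) * ENNReal.ofReal (1 / √(n + 1)) ≤
      8 * ENNReal.ofReal (1 / √(m + 1)) := by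
  set a : ℝ := m + 1
  have ha : 1 ≤ a := by simp [a]
  refine ENNReal.tsum_le_of_sum_range_le fun N => ?_
  calc ∑ n ∈ Finset.range N, ENNReal.ofReal (1 / (m + n + 1)) * ENNReal.ofReal (1 / √(n + 1))
      = ENNReal.ofReal (∑ n ∈ Finset.range N, 1 / (n + a) * (1 / √(n + 1))) := by
        rw [ENNReal.ofReal_sum_of_nonneg fun n _ => by positivity]
        refine Finset.sum_congr rfl fun n _ => ?_
        rw [← ENNReal.ofReal_mul (by positivity), add_assoc, add_comm (m : ℝ), add_assoc,
          add_comm 1]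
    _ ≤ ENNReal.ofReal (8 / √a) := by
        refine ENNReal.ofReal_le_ofReal ?_
        calc ∑ n ∈ Finset.range N, 1 / (n + a) * (1 / √(n + 1))
            ≤ ∑ n ∈ Finset.range N,
                8 / √a * (√(n + 1 : ℕ) / (√(n + 1 : ℕ) + √a) - √n / (√n + √a)) :=
              Finset.sum_le_sum fun n _ => inv_sqrt_mul_add_le ha n
          _ = 8 / √a * (√N / (√N + √a)) := by
              rw [← Finset.mul_sum, Finset.sum_range_sub fun n : ℕ => √n / (√n + √a)]
              simp
          _ ≤ 8 / √a := by
              refine mul_le_of_le_one_right (by positivity) (div_le_one_of_le₀ ?_ (by positivity))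
              exact le_add_of_nonneg_right (sqrt_nonneg a)
    _ = 8 * ENNReal.ofReal (1 / √a) := by
        rw [← ENNReal.ofReal_ofNat, ← ENNReal.ofReal_mul (by norm_num), mul_one_div]

theorem tsum_tsum_mul_mul_hilbertKernel_le (a : ℕ → ℝ≥0∞) :
    ∑' m, ∑' n, a m * a n * ENNReal.ofReal (1 / (m + n + 1)) ≤ 8 * ∑' n, a n ^ 2 :=
  tsum_tsum_mul_mul_le_of_schur (p := fun n : ℕ => ENNReal.ofReal (1 / √(n + 1)))
    (fun m n => by rw [add_comm (m : ℝ)])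
    (fun n => (ENNReal.ofReal_pos.2 (by positivity)).ne') (fun _ => ENNReal.ofReal_ne_top)
    tsum_hilbertKernel_mul_le a

lemma setLIntegral_Ioo_pow {r : ℝ} (hr : 0 ≤ r) (k : ℕ) :
    ∫⁻ t in Ioo 0 r, ENNReal.ofReal (t ^ k) = ENNReal.ofReal (r ^ (k + 1) / (k + 1)) := by
  rw [← ofReal_integral_eq_lintegral_ofReal]
  · rw [← integral_Ioc_eq_integral_Ioo, ← intervalIntegral.integral_of_le hr, integral_pow]
    simp
  · exact (continuous_pow k).integrableOn_Icc.mono_set Ioo_subset_Icc_self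
  · filter_upwards [ae_restrict_mem measurableSet_Ioo] with t ht
    exact pow_nonneg ht.1.le k

theorem setLIntegral_sq_tsum_mul_pow_le (b : ℕ → ℝ≥0∞) {r : ℝ} (hr : 0 ≤ r) :
    ∫⁻ t in Ioo 0 r, (∑' n, b n * ENNReal.ofReal (t ^ n)) ^ 2 ≤
      8 * ENNReal.ofReal r * ∑' n, (b n * ENNReal.ofReal (r ^ n)) ^ 2 := by
  have hexpand : ∀ t ∈ Ioo 0 r, (∑' n, b n * ENNReal.ofReal (t ^ n)) ^ 2 =
      ∑' m, ∑' n, b m * b n * ENNReal.ofReal (t ^ (m + n)) := by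
    intro t ht
    rw [sq, ← ENNReal.tsum_mul_right]
    refine tsum_congr fun m => ?_
    rw [← ENNReal.tsum_mul_left]
    refine tsum_congr fun n => ?_
    rw [pow_add, ENNReal.ofReal_mul (pow_nonneg ht.1.le m), mul_mul_mul_comm]
  have hterm : ∀ m n : ℕ, ∫⁻ t in Ioo 0 r, b m * b n * ENNReal.ofReal (t ^ (m + n)) =
      b m * ENNReal.ofReal (r ^ m) * (b n * ENNReal.ofReal (r ^ n)) *
        ENNReal.ofReal (1 / (m + n + 1)) * ENNReal.ofReal r := by
    intro m n
    have : r ^ (m + n + 1) / ((m + n : ℕ) + 1) = r ^ m * r ^ n * (1 / (m + n + 1)) * r := by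
      push_cast
      ring
    rw [lintegral_const_mul _ (by fun_prop), setLIntegral_Ioo_pow hr, this,
      ENNReal.ofReal_mul (by positivity), ENNReal.ofReal_mul (by positivity),
      ENNReal.ofReal_mul (by positivity)]
    ring
  calc ∫⁻ t in Ioo 0 r, (∑' n, b n * ENNReal.ofReal (t ^ n)) ^ 2
      = ∑' m, ∑' n, ∫⁻ t in Ioo 0 r, b m * b n * ENNReal.ofReal (t ^ (m + n)) := by
        rw [setLIntegral_congr_fun measurableSet_Ioo hexpand, lintegral_tsum (by fun_prop)]
        exact tsum_congr fun m => lintegral_tsum (by fun_prop)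
    _ ≤ 8 * (∑' n, (b n * ENNReal.ofReal (r ^ n)) ^ 2) * ENNReal.ofReal r := by
        simp only [hterm, ENNReal.tsum_mul_right]
        gcongr
        exact tsum_tsum_mul_mul_hilbertKernel_le fun n => b n * ENNReal.ofReal (r ^ n)
    _ = 8 * ENNReal.ofReal r * ∑' n, (b n * ENNReal.ofReal (r ^ n)) ^ 2 := mul_right_comm _ _ _

end Hilbert

section PolarCoordinates

lemma setLIntegral_ball_eq_lintegral_circleMap (R : ℝ) {F : ℂ → ℝ≥0∞} (hF : Measurable F) :
    ∫⁻ z in Metric.ball 0 R, F z =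
      ∫⁻ r in Ioo 0 R, ENNReal.ofReal r * ∫⁻ θ in Ioo (-π) π, F (circleMap 0 r θ) := by
  set f : ℂ → ℝ≥0∞ := (Metric.ball 0 R).indicator F
  have hf : Measurable f := hF.indicator measurableSet_ball
  have hsymm : ∀ p : ℝ × ℝ, Complex.polarCoord.symm p = circleMap 0 p.1 p.2 := fun p => by
    rw [Complex.polarCoord_symm_apply, circleMap_zero, Complex.exp_mul_I]
    push_cast
    rfl
  have hcircle : Measurable fun p : ℝ × ℝ => circleMap 0 p.1 p.2 := by
    unfold circleMap
    fun_prop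
  have hradial : ∀ r ∈ Ioi (0 : ℝ),
      ∫⁻ θ in Ioo (-π) π, ENNReal.ofReal r * f (circleMap 0 r θ) =
        (Iio R).indicator
          (fun r => ENNReal.ofReal r * ∫⁻ θ in Ioo (-π) π, F (circleMap 0 r θ)) r := by
    intro r hr
    have hnorm : ∀ θ, ‖circleMap 0 r θ‖ = r := fun θ => by
      rw [norm_circleMap_zero, abs_of_pos hr]
    rw [lintegral_const_mul' _ _ ENNReal.ofReal_ne_top]
    by_cases hrR : r < R <;> simp [f, indicator, hnorm, hrR]
  rw [← lintegral_indicator measurableSet_ball, ← Complex.lintegral_comp_polarCoord_symm,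
    polarCoord_target, Measure.volume_eq_prod, ← Measure.prod_restrict]
  simp only [hsymm, smul_eq_mul]
  have hpolar : Measurable fun p : ℝ × ℝ => ENNReal.ofReal p.1 * f (circleMap 0 p.1 p.2) :=
    measurable_fst.ennreal_ofReal.mul (hf.comp hcircle)
  rw [lintegral_prod _ hpolar.aemeasurable,
    setLIntegral_congr_fun measurableSet_Ioi hradial, setLIntegral_indicator measurableSet_Iio,
    inter_comm, Ioi_inter_Iio]

end PolarCoordinates

section Coefficients

lemma tsum_enorm_sq_fourierCoeffOn {a b : ℝ} (hab : a < b) {F : ℝ → ℂ}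
    (hF : MemLp F 2 (volume.restrict (Ioc a b))) :
    ∑' n : ℤ, ‖fourierCoeffOn hab F n‖ₑ ^ 2 =
      (ENNReal.ofReal (b - a))⁻¹ * ∫⁻ x in Ioc a b, ‖F x‖ₑ ^ 2 := by
  have hofReal : ∀ z : ℂ, ‖z‖ₑ ^ 2 = ENNReal.ofReal (‖z‖ ^ 2) := fun z => by
    rw [ENNReal.ofReal_pow (norm_nonneg z), ofReal_norm]
  have hparseval := hasSum_sq_fourierCoeffOn hab hF
  simp only [hofReal]
  rw [← ENNReal.ofReal_tsum_of_nonneg (fun _ => by positivity) hparseval.summable,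
    hparseval.tsum_eq, smul_eq_mul, intervalIntegral.integral_of_le hab.le,
    ENNReal.ofReal_mul (inv_nonneg.2 (sub_nonneg.2 hab.le)),
    ENNReal.ofReal_inv_of_pos (sub_pos.2 hab),
    ofReal_integral_eq_lintegral_ofReal (hF.integrable_norm_pow two_ne_zero)
      (ae_of_all _ fun _ => by positivity)]

variable {g : ℂ → ℂ} {r : ℝ}

lemma fourierCoeffOn_circleMap (hr : 0 < r) (hg : DiffContOnCl ℂ g (Metric.ball 0 r)) (n : ℕ) :
    fourierCoeffOn (neg_lt_self pi_pos) (fun θ => g (circleMap 0 r θ)) n = gcoef g n * r ^ n := by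
  set G : ℝ → ℂ := fun θ =>
    deriv (circleMap 0 r) θ • (1 / (circleMap 0 r θ - 0) ^ (n + 1)) • g (circleMap 0 r θ) with hG
  have hr0 : (r : ℂ) ≠ 0 := mod_cast hr.ne'
  have hpi : (π : ℂ) ≠ 0 := mod_cast pi_ne_zero
  have hcauchy : ∫ θ in 0..2 * π, G θ = 2 * π * Complex.I * gcoef g n := by
    have h := hg.circleIntegral_one_div_sub_center_pow_smul hr n
    rw [circleIntegral, smul_eq_mul] at h
    rw [h, gcoef]
    ring
  have hperiodic : Function.Periodic G (2 * π) := fun θ => by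
    simp only [hG, deriv_circleMap, periodic_circleMap 0 r θ]
  have hshift : ∫ θ in -π..π, G θ = ∫ θ in 0..2 * π, G θ := by
    simpa [show -π + 2 * π = π by ring] using hperiodic.intervalIntegral_add_eq (-π) 0
  have hintegrand : ∀ θ : ℝ, fourier (-n : ℤ) (θ : AddCircle (π - -π)) • g (circleMap 0 r θ) =
      r ^ n * Complex.I⁻¹ * G θ := by
    intro θ
    have hexp : Complex.exp (2 * π * Complex.I * ((-n : ℤ) : ℂ) * θ / ((π - -π : ℝ) : ℂ)) =
        (Complex.exp (θ * Complex.I) ^ n)⁻¹ := by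
      rw [← Complex.exp_nat_mul, ← Complex.exp_neg]
      congr 1
      push_cast
      field_simp
      ring
    have hne := Complex.exp_ne_zero (θ * Complex.I)
    simp only [hG, fourier_coe_apply, deriv_circleMap, smul_eq_mul, sub_zero, circleMap_zero, hexp]
    field_simp
    ring
  rw [fourierCoeffOn_eq_integral]
  simp only [hintegrand]
  rw [intervalIntegral.integral_const_mul, hshift, hcauchy, Complex.real_smul]
  push_cast
  field_simp
  ring

lemma tsum_sq_enorm_gcoef_mul_pow_le (hr : 0 < r) (hg : DiffContOnCl ℂ g (Metric.ball 0 r)) :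
    ∑' n, (‖gcoef g n‖ₑ * ENNReal.ofReal (r ^ n)) ^ 2 ≤
      (ENNReal.ofReal (2 * π))⁻¹ * ∫⁻ θ in Ioo (-π) π, ‖g (circleMap 0 r θ)‖ₑ ^ 2 := by
  have hcont : Continuous fun θ => g (circleMap 0 r θ) :=
    hg.continuousOn_ball.comp_continuous (continuous_circleMap 0 r)
      fun θ => by simp [abs_of_pos hr]
  obtain ⟨M, hM⟩ :=
    isCompact_Icc.exists_bound_of_continuousOn (hcont.continuousOn (s := Icc (-π) π))
  have hbdd : MemLp (fun θ => g (circleMap 0 r θ)) 2 (volume.restrict (Icc (-π) π)) :=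
    MemLp.of_bound hcont.aestronglyMeasurable M
      ((ae_restrict_mem measurableSet_Icc).mono fun θ hθ => hM θ hθ)
  have hL2 : MemLp (fun θ => g (circleMap 0 r θ)) 2 (volume.restrict (Ioc (-π) π)) :=
    hbdd.mono_measure (Measure.restrict_mono Ioc_subset_Icc_self le_rfl)
  have hterm : ∀ n : ℕ, (‖gcoef g n‖ₑ * ENNReal.ofReal (r ^ n)) ^ 2 =
      ‖fourierCoeffOn (neg_lt_self pi_pos) (fun θ => g (circleMap 0 r θ)) n‖ₑ ^ 2 := by
    intro n
    rw [fourierCoeffOn_circleMap hr hg, enorm_mul, enorm_pow, ENNReal.ofReal_pow hr.le,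
      ← ofReal_norm (r : ℂ), Complex.norm_of_nonneg hr.le]
  simp only [hterm]
  refine (ENNReal.tsum_comp_le_tsum_of_injective Nat.cast_injective fun n : ℤ =>
    ‖fourierCoeffOn (neg_lt_self pi_pos) (fun θ => g (circleMap 0 r θ)) n‖ₑ ^ 2).trans_eq ?_
  rw [tsum_enorm_sq_fourierCoeffOn _ hL2, Measure.restrict_congr_set Ioo_ae_eq_Ioc, sub_neg_eq_add,
    ← two_mul]

/-- The majorant `∑ |ĝ(n)| tⁿ` of `|g|` on the circle `|z| = t`, as a function of `t`. It takes
values in `[0, ∞]`, so that no convergence is required. -/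
def coeffMajorant (g : ℂ → ℂ) (t : ℝ) : ℝ≥0∞ :=
  ∑' n, ‖gcoef g n‖ₑ * ENNReal.ofReal (t ^ n)

lemma measurable_coeffMajorant (g : ℂ → ℂ) : Measurable (coeffMajorant g) := by
  unfold coeffMajorant
  fun_prop

theorem setLIntegral_sq_coeffMajorant_le (hr : 0 < r) (hg : DiffContOnCl ℂ g (Metric.ball 0 r)) :
    ∫⁻ t in Ioo 0 r, coeffMajorant g t ^ 2 ≤
      8 * ENNReal.ofReal r *
        ((ENNReal.ofReal (2 * π))⁻¹ * ∫⁻ θ in Ioo (-π) π, ‖g (circleMap 0 r θ)‖ₑ ^ 2) :=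
  (setLIntegral_sq_tsum_mul_pow_le _ hr.le).trans
    (mul_le_mul_right (tsum_sq_enorm_gcoef_mul_pow_le hr hg) _)

lemma gcoef_zero (f : ℂ → ℂ) : gcoef f 0 = f 0 := by simp [gcoef]

lemma gcoef_deriv (f : ℂ → ℂ) (n : ℕ) : gcoef (deriv f) n = (n + 1) * gcoef f (n + 1) := by
  have : (n : ℂ) + 1 ≠ 0 := n.cast_add_one_ne_zero
  rw [gcoef, gcoef, iteratedDeriv_succ', Nat.factorial_succ]
  push_cast
  field_simp

lemma setLIntegral_coeffMajorant_deriv (f : ℂ → ℂ) {s : ℝ} (hs : 0 ≤ s) :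
    ∫⁻ t in Ioo 0 s, coeffMajorant (deriv f) t =
      ∑' n, ‖gcoef f (n + 1)‖ₑ * ENNReal.ofReal (s ^ (n + 1)) := by
  have hterm : ∀ n : ℕ, ∫⁻ t in Ioo 0 s, ‖gcoef (deriv f) n‖ₑ * ENNReal.ofReal (t ^ n) =
      ‖gcoef f (n + 1)‖ₑ * ENNReal.ofReal (s ^ (n + 1)) := by
    intro n
    have hn : ‖(n : ℂ) + 1‖ₑ = ENNReal.ofReal (n + 1) := by
      rw [← ofReal_norm]
      exact_mod_cast congrArg ENNReal.ofReal (Complex.norm_natCast (n + 1))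
    rw [lintegral_const_mul _ (by fun_prop), setLIntegral_Ioo_pow hs, gcoef_deriv, enorm_mul, hn,
      mul_right_comm, ← ENNReal.ofReal_mul (by positivity),
      mul_div_cancel₀ _ n.cast_add_one_ne_zero, mul_comm]
  unfold coeffMajorant
  rw [lintegral_tsum (by fun_prop)]
  exact tsum_congr hterm

lemma enorm_le_add_tsum_gcoef {f : ℂ → ℂ} {R : ℝ} (hf : DifferentiableOn ℂ f (Metric.ball 0 R))
    {z : ℂ} (hz : z ∈ Metric.ball 0 R) :
    ‖f z‖ₑ ≤ ‖f 0‖ₑ + ∑' n, ‖gcoef f (n + 1)‖ₑ * ENNReal.ofReal (‖z‖ ^ (n + 1)) := by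
  have htaylor : HasSum (fun n => gcoef f n * z ^ n) (f z) := by
    refine (Complex.hasSum_taylorSeries_on_ball hf hz).congr_fun ?_
    intro n
    rw [gcoef, sub_zero, smul_eq_mul, smul_eq_mul]
    ring
  have henorm : ∀ n : ℕ, ‖gcoef f n * z ^ n‖ₑ = ‖gcoef f n‖ₑ * ENNReal.ofReal (‖z‖ ^ n) :=
    fun n => by rw [enorm_mul, enorm_pow, ENNReal.ofReal_pow (norm_nonneg z), ofReal_norm]
  calc ‖f z‖ₑ = ‖∑' n, gcoef f n * z ^ n‖ₑ := by rw [htaylor.tsum_eq]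
    _ ≤ ∑' n, ‖gcoef f n * z ^ n‖ₑ := enorm_tsum_le_tsum_enorm
    _ = ‖f 0‖ₑ + ∑' n, ‖gcoef f (n + 1)‖ₑ * ENNReal.ofReal (‖z‖ ^ (n + 1)) := by
        rw [tsum_eq_zero_add' ENNReal.summable]
        simp only [henorm, gcoef_zero, pow_zero, mul_one]

theorem ofReal_Minf_le {f : ℂ → ℂ} {R : ℝ} (hf : DifferentiableOn ℂ f (Metric.ball 0 R)) {s : ℝ}
    (hs : s ∈ Ico 0 R) :
    ENNReal.ofReal (Minf f s) ≤ ‖f 0‖ₑ + ∫⁻ t in Ioo 0 s, coeffMajorant (deriv f) t := by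
  rw [setLIntegral_coeffMajorant_deriv f hs.1]
  have hcont : ContinuousOn f (Metric.sphere 0 s) :=
    hf.continuousOn.mono (Metric.sphere_subset_ball hs.2)
  obtain ⟨z, hz, hmax⟩ := (isCompact_sphere (0 : ℂ) s).exists_sSup_image_eq
    (NormedSpace.sphere_nonempty.2 hs.1) hcont.norm
  have hzs : ‖z‖ = s := by simpa using hz
  rw [Minf, hmax, ofReal_norm, ← hzs]
  exact enorm_le_add_tsum_gcoef hf (Metric.sphere_subset_ball hs.2 hz)

end Coefficients

section RadialWeights

variable {v : ℝ → ℝ}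

lemma ofReal_hatw (hv : RadialWeight v) {t : ℝ} (ht : t ∈ Ico 0 1) :
    ENNReal.ofReal (hatw v t) = ∫⁻ s in Ioo t 1, ENNReal.ofReal (v s) := by
  obtain ⟨-, hpos, hint⟩ := hv
  rw [hatw, intervalIntegral.integral_of_le ht.2.le, integral_Ioc_eq_integral_Ioo,
    ofReal_integral_eq_lintegral_ofReal (hint.mono_set (Ioo_subset_Ioo_left ht.1))]
  filter_upwards [ae_restrict_mem measurableSet_Ioo] with s hs
  exact (hpos s ⟨ht.1.trans hs.1.le, hs.2⟩).le

lemma hatw_pos (hv : RadialWeight v) {t : ℝ} (ht : t ∈ Ico 0 1) : 0 < hatw v t := by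
  obtain ⟨-, hpos, hint⟩ := hv
  refine intervalIntegral.intervalIntegral_pos_of_pos_on ?_
    (fun s hs => hpos s ⟨ht.1.trans hs.1.le, hs.2⟩) ht.2
  exact (intervalIntegrable_iff_integrableOn_Ioo_of_le ht.2.le).2
    (hint.mono_set (Ioo_subset_Ioo_left ht.1))

lemma continuousOn_hatw (hv : RadialWeight v) : ContinuousOn (hatw v) (Ico 0 1) := by
  have h := intervalIntegral.continuousOn_primitive_interval_left (f := v) (a := 0) (b := 1)
    (μ := volume) (by
      rw [uIcc_of_le zero_le_one, integrableOn_Icc_iff_integrableOn_Ioo]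
      exact hv.2.2)
  rw [uIcc_of_le zero_le_one] at h
  exact h.mono Ico_subset_Icc_self

lemma continuousOn_one_div_hatw (hv : RadialWeight v) :
    ContinuousOn (fun t => 1 / hatw v t) (Ico 0 1) :=
  continuousOn_const.div (continuousOn_hatw hv) fun _ ht => (hatw_pos hv ht).ne'

lemma continuousOn_hatw_div_sq (hv : RadialWeight v) :
    ContinuousOn (fun s => hatw v s / (1 - s) ^ 2) (Ico 0 1) :=
  (continuousOn_hatw hv).div (by fun_prop) fun _ hs => pow_ne_zero 2 (sub_pos.2 hs.2).ne'

lemma hatw_div_sq_pos (hv : RadialWeight v) {s : ℝ} (hs : s ∈ Ico 0 1) :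
    0 < hatw v s / (1 - s) ^ 2 :=
  div_pos (hatw_pos hv hs) (pow_pos (sub_pos.2 hs.2) 2)

lemma setLIntegral_mul_setLIntegral_one_div_le_M1v_sq (v : ℝ → ℝ) {r : ℝ} (hr : r ∈ Ioo 0 1) :
    (∫⁻ s in Ioo r 1, ENNReal.ofReal (hatw v s / (1 - s) ^ 2)) *
      (∫⁻ s in Ioo 0 r, ENNReal.ofReal (1 / hatw v s)) ≤ M1v v ^ 2 := by
  have hsup : (∫⁻ s in Ioo r 1, ENNReal.ofReal (hatw v s / (1 - s) ^ 2)) ^ (1 / 2 : ℝ) *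
      (∫⁻ s in Ioo 0 r, ENNReal.ofReal (1 / hatw v s)) ^ (1 / 2 : ℝ) ≤ M1v v :=
    le_iSup₂ (f := fun r (_ : r ∈ Ioo (0 : ℝ) 1) =>
      (∫⁻ s in Ioo r 1, ENNReal.ofReal (hatw v s / (1 - s) ^ 2)) ^ (1 / 2 : ℝ) *
      (∫⁻ s in Ioo 0 r, ENNReal.ofReal (1 / hatw v s)) ^ (1 / 2 : ℝ)) r hr
  simpa only [mul_pow, rpow_half_sq] using pow_le_pow_left' hsup 2

lemma setLIntegral_one_div_hatw_ne_zero (hv : RadialWeight v) {r : ℝ} (hr : r ∈ Ioo 0 1) :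
    ∫⁻ s in Ioo 0 r, ENNReal.ofReal (1 / hatw v s) ≠ 0 := by
  have hsub : Ioo 0 r ⊆ Ico 0 1 := fun s hs => ⟨hs.1.le, hs.2.trans hr.2⟩
  exact setLIntegral_Ioo_ofReal_ne_zero hr.1 ((continuousOn_one_div_hatw hv).mono hsub)
    fun s hs => one_div_pos.2 (hatw_pos hv (hsub hs))

lemma M1v_ne_zero (hv : RadialWeight v) : M1v v ≠ 0 := by
  intro h
  have hr : (1 / 2 : ℝ) ∈ Ioo 0 1 := by norm_num
  have hsub : Ioo (1 / 2 : ℝ) 1 ⊆ Ico 0 1 := fun s hs => ⟨hr.1.le.trans hs.1.le, hs.2⟩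
  have hw : ∫⁻ s in Ioo (1 / 2 : ℝ) 1, ENNReal.ofReal (hatw v s / (1 - s) ^ 2) ≠ 0 :=
    setLIntegral_Ioo_ofReal_ne_zero hr.2 ((continuousOn_hatw_div_sq hv).mono hsub)
      fun s hs => hatw_div_sq_pos hv (hsub hs)
  have hle := setLIntegral_mul_setLIntegral_one_div_le_M1v_sq v hr
  rw [h, zero_pow two_ne_zero, nonpos_iff_eq_zero] at hle
  exact mul_ne_zero hw (setLIntegral_one_div_hatw_ne_zero hv hr) hle

lemma setLIntegral_hatw_div_sq_ne_top (hv : RadialWeight v) (hM : M1v v ≠ ⊤) :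
    ∫⁻ s in Ioo 0 1, ENNReal.ofReal (hatw v s / (1 - s) ^ 2) ≠ ⊤ := by
  have hr : (1 / 2 : ℝ) ∈ Ioo 0 1 := by norm_num
  have hleft : ∫⁻ s in Icc (0 : ℝ) (1 / 2), ENNReal.ofReal (hatw v s / (1 - s) ^ 2) ≠ ⊤ :=
    ((continuousOn_hatw_div_sq hv).mono
      (Icc_subset_Ico_right hr.2)).integrableOn_Icc.lintegral_lt_top.ne
  have hright : ∫⁻ s in Ioo (1 / 2 : ℝ) 1, ENNReal.ofReal (hatw v s / (1 - s) ^ 2) ≠ ⊤ := by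
    intro h
    have hle := setLIntegral_mul_setLIntegral_one_div_le_M1v_sq v hr
    rw [h, ENNReal.top_mul (setLIntegral_one_div_hatw_ne_zero hv hr)] at hle
    exact ENNReal.pow_ne_top hM (top_le_iff.1 hle)
  have hcover : Ioo (0 : ℝ) 1 ⊆ Icc 0 (1 / 2) ∪ Ioo (1 / 2) 1 := by grind
  exact ne_top_of_le_ne_top (ENNReal.add_ne_top.2 ⟨hleft, hright⟩)
    ((lintegral_mono_set hcover).trans (lintegral_union_le _ _ _))

end RadialWeights

section DirichletNorm

variable {v : ℝ → ℝ}

lemma mul_setLIntegral_sq_coeffMajorant_le (v : ℝ → ℝ) {g : ℂ → ℂ} {s : ℝ} (hs : 0 < s)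
    (hg : DiffContOnCl ℂ g (Metric.ball 0 s)) :
    ENNReal.ofReal (v s) * ∫⁻ t in Ioo 0 s, coeffMajorant g t ^ 2 ≤
      4 * (ENNReal.ofReal π)⁻¹ * (ENNReal.ofReal s *
        ∫⁻ θ in Ioo (-π) π, ‖g (circleMap 0 s θ)‖ₑ ^ 2 *
          ENNReal.ofReal (v ‖circleMap 0 s θ‖)) := by
  have hconst : 8 * (ENNReal.ofReal (2 * π))⁻¹ = 4 * (ENNReal.ofReal π)⁻¹ := by
    rw [ENNReal.ofReal_mul zero_le_two, ENNReal.mul_inv (by simp) (by simp), ← mul_assoc,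
      ENNReal.ofReal_ofNat, show (8 : ℝ≥0∞) = 4 * 2 by norm_num, mul_assoc 4,
      ENNReal.mul_inv_cancel two_ne_zero (by simp), mul_one]
  simp only [norm_circleMap_zero, abs_of_pos hs]
  rw [lintegral_mul_const' _ _ ENNReal.ofReal_ne_top, ← hconst]
  refine (mul_le_mul_right (setLIntegral_sq_coeffMajorant_le hs hg) _).trans_eq ?_
  ring

theorem setLIntegral_sq_coeffMajorant_mul_hatw_le (hv : RadialWeight v) {g : ℂ → ℂ}
    (hg : DifferentiableOn ℂ g (Metric.ball 0 1)) (hgm : Measurable g) :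
    ∫⁻ t in Ioo 0 1, coeffMajorant g t ^ 2 * ENNReal.ofReal (hatw v t) ≤
      4 * ((ENNReal.ofReal π)⁻¹ *
        ∫⁻ z in Metric.ball 0 1, ‖g z‖ₑ ^ 2 * ENNReal.ofReal (v ‖z‖)) := by
  have hvm : Measurable v := hv.1
  calc ∫⁻ t in Ioo 0 1, coeffMajorant g t ^ 2 * ENNReal.ofReal (hatw v t)
      = ∫⁻ t in Ioo 0 1, coeffMajorant g t ^ 2 * ∫⁻ s in Ioo t 1, ENNReal.ofReal (v s) :=
        setLIntegral_congr_fun measurableSet_Ioo fun t ht => by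
          rw [ofReal_hatw hv (Ioo_subset_Ico_self ht)]
    _ = ∫⁻ s in Ioo 0 1, ENNReal.ofReal (v s) * ∫⁻ t in Ioo 0 s, coeffMajorant g t ^ 2 :=
        (setLIntegral_Ioo_mul_setLIntegral_Ioo hvm.ennreal_ofReal.aemeasurable
          ((measurable_coeffMajorant g).pow_const 2).aemeasurable).symm
    _ ≤ ∫⁻ s in Ioo 0 1, 4 * (ENNReal.ofReal π)⁻¹ * (ENNReal.ofReal s *
          ∫⁻ θ in Ioo (-π) π, ‖g (circleMap 0 s θ)‖ₑ ^ 2 *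
            ENNReal.ofReal (v ‖circleMap 0 s θ‖)) :=
        setLIntegral_mono' measurableSet_Ioo fun s hs =>
          mul_setLIntegral_sq_coeffMajorant_le v hs.1
            (hg.mono (Metric.closure_ball_subset_closedBall.trans
              (Metric.closedBall_subset_ball hs.2))).diffContOnCl
    _ = 4 * ((ENNReal.ofReal π)⁻¹ *
          ∫⁻ z in Metric.ball 0 1, ‖g z‖ₑ ^ 2 * ENNReal.ofReal (v ‖z‖)) := by
        rw [lintegral_const_mul' _ _ (by simp [ENNReal.mul_eq_top, pi_pos]), mul_assoc,
          setLIntegral_ball_eq_lintegral_circleMap 1 (by fun_prop)]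

lemma setLIntegral_sq_coeffMajorant_deriv_mul_hatw_le (hv : RadialWeight v) {f : ℂ → ℂ}
    (hf : DifferentiableOn ℂ f (Metric.ball 0 1)) :
    ∫⁻ t in Ioo 0 1, coeffMajorant (deriv f) t ^ 2 * ENNReal.ofReal (hatw v t) ≤
      4 * DvSq v f :=
  (setLIntegral_sq_coeffMajorant_mul_hatw_le hv (hf.deriv Metric.isOpen_ball)
    (measurable_deriv f)).trans (mul_le_mul_right le_add_self 4)

lemma setLIntegral_hatw_mul_sq_setLIntegral_coeffMajorant_le (hv : RadialWeight v)
    (hM : M1v v ≠ ⊤) {f : ℂ → ℂ} (hf : DifferentiableOn ℂ f (Metric.ball 0 1)) :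
    ∫⁻ s in Ioo 0 1, ENNReal.ofReal (hatw v s / (1 - s) ^ 2) *
        (∫⁻ t in Ioo 0 s, coeffMajorant (deriv f) t) ^ 2 ≤
      16 * M1v v ^ 2 * DvSq v f := by
  have hpos : ∀ t ∈ Ioo (0 : ℝ) 1, 0 < hatw v t := fun t ht =>
    hatw_pos hv (Ioo_subset_Ico_self ht)
  have hB : ((M1v v ^ 2).toNNReal : ℝ≥0∞) = M1v v ^ 2 :=
    ENNReal.coe_toNNReal (ENNReal.pow_ne_top hM)
  have hhardy := setLIntegral_mul_sq_setLIntegral_Ioo_le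
    (((continuousOn_hatw_div_sq hv).mono Ioo_subset_Ico_self).aemeasurable
      measurableSet_Ioo).ennreal_ofReal
    (((continuousOn_one_div_hatw hv).mono Ioo_subset_Ico_self).aemeasurable
      measurableSet_Ioo).ennreal_ofReal
    (measurable_coeffMajorant (deriv f)).aemeasurable
    (fun t ht => (ENNReal.ofReal_pos.2 (one_div_pos.2 (hpos t ht))).ne')
    (fun _ _ => ENNReal.ofReal_ne_top)
    (fun r hr => (setLIntegral_mul_setLIntegral_one_div_le_M1v_sq v hr).trans_eq hB.symm)
  calc _ ≤ _ := hhardy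
    _ = 4 * M1v v ^ 2 *
          ∫⁻ t in Ioo 0 1, coeffMajorant (deriv f) t ^ 2 * ENNReal.ofReal (hatw v t) := by
        rw [hB]
        congr 1
        refine setLIntegral_congr_fun measurableSet_Ioo fun t ht => ?_
        rw [← ENNReal.ofReal_inv_of_pos (one_div_pos.2 (hpos t ht)), one_div, inv_inv]
    _ ≤ 4 * M1v v ^ 2 * (4 * DvSq v f) := by
        gcongr
        exact setLIntegral_sq_coeffMajorant_deriv_mul_hatw_le hv hf
    _ = 16 * M1v v ^ 2 * DvSq v f := by ring

lemma ofReal_sq_Minf_mul_hatw_le (hv : RadialWeight v) {f : ℂ → ℂ}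
    (hf : DifferentiableOn ℂ f (Metric.ball 0 1)) {s : ℝ} (hs : s ∈ Ico 0 1) :
    ENNReal.ofReal (Minf f s ^ 2 * hatw v s / (1 - s) ^ 2) ≤
      ENNReal.ofReal (hatw v s / (1 - s) ^ 2) * (2 * ‖f 0‖ₑ ^ 2) +
        2 * (ENNReal.ofReal (hatw v s / (1 - s) ^ 2) *
          (∫⁻ t in Ioo 0 s, coeffMajorant (deriv f) t) ^ 2) := by
  have hMinf : 0 ≤ Minf f s := Real.sSup_nonneg <| forall_mem_image.2 fun _ _ => norm_nonneg _
  rw [mul_div_assoc, mul_comm, ENNReal.ofReal_mul (hatw_div_sq_pos hv hs).le,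
    ENNReal.ofReal_pow hMinf, mul_left_comm 2, ← mul_add]
  gcongr
  exact (pow_le_pow_left' (ofReal_Minf_le hf hs) 2).trans (ennreal_add_sq_le _ _)

theorem setLIntegral_sq_Minf_mul_hatw_le (hv : RadialWeight v) (hM : M1v v ≠ ⊤) {f : ℂ → ℂ}
    (hf : DifferentiableOn ℂ f (Metric.ball 0 1)) :
    ∫⁻ s in Ioo 0 1, ENNReal.ofReal (Minf f s ^ 2 * hatw v s / (1 - s) ^ 2) ≤
      (2 * (∫⁻ s in Ioo 0 1, ENNReal.ofReal (hatw v s / (1 - s) ^ 2)) + 32 * M1v v ^ 2) *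
        DvSq v f := by
  set w : ℝ → ℝ≥0∞ := fun s => ENNReal.ofReal (hatw v s / (1 - s) ^ 2)
  have hw : AEMeasurable w (volume.restrict (Ioo 0 1)) :=
    (((continuousOn_hatw_div_sq hv).mono Ioo_subset_Ico_self).aemeasurable
      measurableSet_Ioo).ennreal_ofReal
  calc ∫⁻ s in Ioo 0 1, ENNReal.ofReal (Minf f s ^ 2 * hatw v s / (1 - s) ^ 2)
      ≤ ∫⁻ s in Ioo 0 1, (w s * (2 * ‖f 0‖ₑ ^ 2) +
          2 * (w s * (∫⁻ t in Ioo 0 s, coeffMajorant (deriv f) t) ^ 2)) :=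
        setLIntegral_mono' measurableSet_Ioo fun s hs =>
          ofReal_sq_Minf_mul_hatw_le hv hf (Ioo_subset_Ico_self hs)
    _ = (∫⁻ s in Ioo 0 1, w s) * (2 * ‖f 0‖ₑ ^ 2) +
          2 * ∫⁻ s in Ioo 0 1, w s * (∫⁻ t in Ioo 0 s, coeffMajorant (deriv f) t) ^ 2 := by
        rw [lintegral_add_left' (hw.mul_const _), lintegral_mul_const'' _ hw,
          lintegral_const_mul' _ _ ENNReal.ofNat_ne_top]
    _ ≤ (∫⁻ s in Ioo 0 1, w s) * (2 * DvSq v f) + 2 * (16 * M1v v ^ 2 * DvSq v f) := by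
        gcongr
        · exact le_self_add
        · exact setLIntegral_hatw_mul_sq_setLIntegral_coeffMajorant_le hv hM hf
    _ = (2 * (∫⁻ s in Ioo 0 1, w s) + 32 * M1v v ^ 2) * DvSq v f := by ring

end DirichletNorm

/-- Lemma 2.4 (Hardy–Littlewood type inequality): if `M₁(v) < ∞`, then
`∫_0^1 M_∞(s,f)² v̂(s)/(1-s)² ds ≤ C M₁(v)² ‖f‖²_{D_v}`. -/
theorem statement1 (v : ℝ → ℝ) (hv : RadialWeight v) (hM1 : M1v v < ⊤) :
    ∃ C : ℝ, 0 < C ∧ ∀ f : ℂ → ℂ, DifferentiableOn ℂ f (Metric.ball 0 1) →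
      ∫⁻ s in Set.Ioo (0:ℝ) 1, ENNReal.ofReal (Minf f s ^ 2 * hatw v s / (1-s)^2) ≤
        ENNReal.ofReal C * (M1v v)^2 * DvSq v f := by
  set W := ∫⁻ s in Ioo 0 1, ENNReal.ofReal (hatw v s / (1 - s) ^ 2)
  have hM0 : M1v v ^ 2 ≠ 0 := pow_ne_zero 2 (M1v_ne_zero hv)
  have hMtop : M1v v ^ 2 ≠ ⊤ := ENNReal.pow_ne_top hM1.ne
  have hW : 2 * W / M1v v ^ 2 ≠ ⊤ := ENNReal.div_ne_top
    (ENNReal.mul_ne_top ENNReal.ofNat_ne_top (setLIntegral_hatw_div_sq_ne_top hv hM1.ne)) hM0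
  refine ⟨(2 * W / M1v v ^ 2).toReal + 32, by positivity, fun f hf => ?_⟩
  rw [ENNReal.ofReal_add ENNReal.toReal_nonneg (by norm_num), ENNReal.ofReal_toReal hW, add_mul,
    ENNReal.div_mul_cancel hM0 hMtop, ENNReal.ofReal_ofNat]
  exact setLIntegral_sq_Minf_mul_hatw_le hv hM1.ne hf

end
end
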